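/- arXiv:math/0703532 — 2 statements merged into one kernel-verified Lean document; each statement's English description precedes it below -/
import Mathlib

section
/- Fix g ≥ 1 and let S be a finite subset of Sp(2g, ℤ) whose elements generate Sp(2g, ℤ) as a group. For each N, among the |S|^N words w : Fin N → S, let G(N) be the number of words whose product M_w satisfies all of: (1) q is irreducible, where q ∈ ℚ[X] is the characteristic polynomial of the underlying 2g × 2g integer matrix of M_w mapped to ℚ[X]; (2) q is not a cyclotomic polynomial, i.e. q ≠ Polynomial.cyclotomic m ℚ for every m; (3) q is not of the form h(X^k) for any k > 1, i.e. there is no k > 1 and h ∈ ℚ[X] with q = h.comp (X^k). Then G(N) / |S|^N tends to 1 as N tends to infinity. -/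
section Equidistribution

/-- One step of the averaging (Markov) operator. -/
noncomputable def walkOp {G ι : Type*} [Group G] [Fintype ι] (f : ι → G) (F : G → ℝ) : G → ℝ :=
  fun x => (∑ i, F (x * f i)) / (Fintype.card ι : ℝ)

lemma walkOp_iterate {G ι : Type*} [Group G] [Fintype ι] (f : ι → G) (N : ℕ) (F : G → ℝ) (x : G) :
    (walkOp f)^[N] F x =
      (∑ w : Fin N → ι, F (x * (List.ofFn fun i => f (w i)).prod)) / (Fintype.card ι : ℝ) ^ N := by
  induction N generalizing x with
  | zero => simp
  | succ N ih =>
    rw [Function.iterate_succ_apply']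
    simp only [walkOp, ih]
    rw [← (Fin.consEquiv (fun _ : Fin (N+1) => ι)).sum_comp, Fintype.sum_prod_type,
      ← Finset.sum_div, div_div, pow_succ]
    simp [Fin.consEquiv, List.ofFn_succ, mul_assoc]

lemma exists_word_length {G ι : Type*} [Group G] [Finite G] [Nonempty ι]
    (hG : commutator G = ⊤) (f : ι → G) (hf : Subgroup.closure (Set.range f) = ⊤) :
    ∃ N : ℕ, ∀ x : G, ∃ w : Fin N → ι, (List.ofFn fun i => f (w i)).prod = x := by
  classical
  set m := Nat.card G with hm
  have hmpos : 0 < m := Nat.card_pos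
  have hpow : ∀ x : G, x ^ m = 1 := fun x => pow_card_eq_one'
  let A : ℕ → Set G := fun n => {x | ∃ l : List ι, l.length = n ∧ (l.map f).prod = x}
  have Amul : ∀ a b x y, x ∈ A a → y ∈ A b → x * y ∈ A (a + b) := by
    rintro a b x y ⟨l, hl, rfl⟩ ⟨l', hl', rfl⟩
    exact ⟨l ++ l', by simp [hl, hl'], by simp⟩
  have Apow : ∀ i n, f i ^ n ∈ A n := fun i n => ⟨List.replicate n i, by simp, by simp⟩
  have Aone : ∀ k, (1 : G) ∈ A (k * m) := by
    intro k
    obtain ⟨i⟩ := (inferInstance : Nonempty ι)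
    have := Apow i (k * m)
    rwa [mul_comm k m, pow_mul, hpow, one_pow, mul_comm m k] at this
  let H : Subgroup G := Subgroup.mk
    (Submonoid.mk (Subsemigroup.mk {x | ∃ k, x ∈ A (k * m)} (by
      rintro x y ⟨k, hk⟩ ⟨k', hk'⟩
      exact ⟨k + k', by rw [add_mul]; exact Amul _ _ _ _ hk hk'⟩)) ⟨0, Aone 0⟩) (by
      rintro x ⟨k, hk⟩
      have h1 : ∀ n, x ^ n ∈ A (n * k * m) := by
        intro n
        induction n with
        | zero => simpa using Aone 0
        | succ n ih =>
          rw [pow_succ]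
          have := Amul _ _ _ _ ih hk
          rwa [show (n + 1) * k * m = n * k * m + k * m by ring]
      have : x⁻¹ = x ^ (m - 1) := by
        rw [eq_comm, ← mul_eq_one_iff_eq_inv, ← pow_succ, Nat.sub_add_cancel hmpos, hpow]
      rw [this]
      exact ⟨_, h1 _⟩)
  have Hmem : ∀ x, x ∈ H ↔ ∃ k, x ∈ A (k * m) := fun x => Iff.rfl
  have finv : ∀ i, (f i)⁻¹ = f i ^ (m - 1) := by
    intro i
    rw [eq_comm, ← mul_eq_one_iff_eq_inv, ← pow_succ, Nat.sub_add_cancel hmpos, hpow]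
  have hconj : ∀ i, ∀ h ∈ H, f i * h * (f i)⁻¹ ∈ H := by
    rintro i h ⟨k, hk⟩
    refine ⟨k + 1, ?_⟩
    have := Amul _ _ _ _ (Amul _ _ _ _ (Apow i 1) hk) (Apow i (m - 1))
    rw [pow_one, ← finv] at this
    rwa [show (k + 1) * m = 1 + k * m + (m - 1) by rw [add_mul, one_mul]; omega]
  have hN : H.Normal := by
    rw [← Subgroup.normalizer_eq_top_iff, eq_top_iff, ← hf, Subgroup.closure_le]
    rintro _ ⟨i, rfl⟩
    rw [SetLike.mem_coe, Subgroup.mem_normalizer_iff]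
    intro h
    refine ⟨hconj i h, fun hh => ?_⟩
    have key : ∀ n, ∀ h ∈ H, f i ^ n * h * (f i ^ n)⁻¹ ∈ H := by
      intro n
      induction n with
      | zero => intro h hh; simpa using hh
      | succ n ih =>
        intro h hh
        have := ih _ (hconj i h hh)
        convert this using 1
        rw [pow_succ]; group
    have := key (m - 1) _ hh
    rw [← finv] at this
    convert this using 1
    group
  have hdiff : ∀ i j, f i * (f j)⁻¹ ∈ H := by
    intro i j
    refine ⟨1, ?_⟩
    have := Amul _ _ _ _ (Apow i 1) (Apow j (m - 1))
    rw [pow_one, ← finv] at this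
    rwa [show 1 * m = 1 + (m - 1) by omega]
  have htop : H = ⊤ := by
    rw [eq_top_iff, ← hG]
    obtain ⟨i0⟩ := (inferInstance : Nonempty ι)
    have hcyc : ∀ x : G ⧸ H, x ∈ Subgroup.zpowers (QuotientGroup.mk' H (f i0)) := by
      intro x
      obtain ⟨x, rfl⟩ := QuotientGroup.mk'_surjective H x
      have hx : x ∈ Subgroup.closure (Set.range f) := by rw [hf]; trivial
      have : Subgroup.closure (Set.range f) ≤
          (Subgroup.zpowers (QuotientGroup.mk' H (f i0))).comap (QuotientGroup.mk' H) := by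
        rw [Subgroup.closure_le]
        rintro _ ⟨i, rfl⟩
        rw [SetLike.mem_coe, Subgroup.mem_comap]
        have : QuotientGroup.mk' H (f i) = QuotientGroup.mk' H (f i0) := by
          rw [← div_eq_one, ← map_div]
          rw [QuotientGroup.mk'_apply, QuotientGroup.eq_one_iff, div_eq_mul_inv]
          exact hdiff i i0
        rw [this]
        exact Subgroup.mem_zpowers _
      exact this hx
    have hab : ∀ a b : G ⧸ H, a * b = b * a := by
      intro a b
      obtain ⟨k, rfl⟩ := hcyc a
      obtain ⟨l, rfl⟩ := hcyc b
      exact (Commute.refl _).zpow_zpow k l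
    rw [commutator_def, Subgroup.commutator_le]
    intro a _ b _
    rw [← QuotientGroup.eq_one_iff, commutatorElement_def]
    have := hab a b
    rw [QuotientGroup.mk_mul, QuotientGroup.mk_mul, QuotientGroup.mk_mul, this,
      QuotientGroup.mk_inv, QuotientGroup.mk_inv]
    group
  have hmono : ∀ k l, k ≤ l → A (k * m) ⊆ A (l * m) := by
    intro k l hkl x hx
    have := Amul _ _ _ _ hx (Aone (l - k))
    rw [mul_one, ← add_mul] at this
    rwa [Nat.add_sub_cancel' hkl] at this
  have hall : ∀ x : G, ∃ k, x ∈ A (k * m) := by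
    intro x
    rw [← Hmem, htop]; trivial
  choose k hk using hall
  obtain ⟨B, hB⟩ := (Set.finite_range k).bddAbove
  refine ⟨B * m, fun x => ?_⟩
  obtain ⟨l, hl, hlx⟩ := hmono _ B (hB ⟨x, rfl⟩) (hk x)
  refine ⟨fun i => l.get (i.cast hl.symm), ?_⟩
  rw [← hlx]
  congr 1
  apply List.ext_get
  · simp [hl]
  · intro n h1 h2
    simp

lemma walk_equidistribution {G ι : Type*} [Group G] [Fintype G] [Fintype ι] [Nonempty ι]
    (hG : commutator G = ⊤) (f : ι → G) (hf : Subgroup.closure (Set.range f) = ⊤) (F : G → ℝ) :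
    Filter.Tendsto (fun N : ℕ =>
      (∑ w : Fin N → ι, F ((List.ofFn fun i => f (w i)).prod)) / (Fintype.card ι : ℝ) ^ N)
      Filter.atTop (nhds ((∑ x, F x) / Fintype.card G)) := by
  obtain ⟨N0, hN0⟩ := exists_word_length hG f hf
  have hc : (0 : ℝ) < Fintype.card ι := by exact_mod_cast Fintype.card_pos
  set δ : ℝ := 1 / (Fintype.card ι : ℝ) ^ N0 with hδ
  have hδ0 : 0 < δ := by positivity
  have hδ1 : δ ≤ 1 := by
    rw [hδ, div_le_one (by positivity)]
    exact one_le_pow₀ (by exact_mod_cast Fintype.card_pos)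
  -- bounds are preserved
  have hub : ∀ (N : ℕ) (F : G → ℝ) (a : ℝ), (∀ x, F x ≤ a) → ∀ x, (walkOp f)^[N] F x ≤ a := by
    intro N F a h x
    rw [walkOp_iterate, div_le_iff₀ (by positivity)]
    calc _ ≤ ∑ w : Fin N → ι, a := Finset.sum_le_sum fun _ _ => h _
      _ = _ := by simp [mul_comm]
  have hlb : ∀ (N : ℕ) (F : G → ℝ) (a : ℝ), (∀ x, a ≤ F x) → ∀ x, a ≤ (walkOp f)^[N] F x := by
    intro N F a h x
    rw [walkOp_iterate, le_div_iff₀ (by positivity)]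
    calc _ = ∑ w : Fin N → ι, a := by simp [mul_comm]
      _ ≤ _ := Finset.sum_le_sum fun _ _ => h _
  have hcon : ∀ (F : G → ℝ) (a b : ℝ), (∀ x, F x ≤ b) → (∃ y, F y ≤ a) →
      ∀ x, (walkOp f)^[N0] F x ≤ b - δ * (b - a) := by
    rintro F a b hb ⟨y, hy⟩ x
    rw [walkOp_iterate, div_le_iff₀ (by positivity)]
    obtain ⟨w0, hw0⟩ := hN0 (x⁻¹ * y)
    classical
    rw [← Finset.add_sum_erase _ _ (Finset.mem_univ w0), hw0]
    have h1 : ∑ w ∈ Finset.univ.erase w0, F (x * (List.ofFn fun i => f (w i)).prod) ≤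
        ∑ w ∈ (Finset.univ : Finset (Fin N0 → ι)).erase w0, b := Finset.sum_le_sum fun _ _ => hb _
    have h2 : ∑ w ∈ (Finset.univ : Finset (Fin N0 → ι)).erase w0, b
        = (Fintype.card ι : ℝ) ^ N0 * b - b := by
      have := Finset.add_sum_erase (Finset.univ : Finset (Fin N0 → ι)) (fun _ => b)
        (Finset.mem_univ w0)
      simp only [Finset.sum_const, Finset.card_univ, Fintype.card_fun, Fintype.card_fin,
        nsmul_eq_mul] at this ⊢
      push_cast at this
      linarith
    have h3 : δ * (Fintype.card ι : ℝ) ^ N0 = 1 := by rw [hδ]; field_simp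
    have h4 : (b - δ * (b - a)) * (Fintype.card ι : ℝ) ^ N0
       = (Fintype.card ι : ℝ) ^ N0 * b - (b - a) * (δ * (Fintype.card ι : ℝ) ^ N0) := by ring
    rw [h4, h3]
    have : x * (x⁻¹ * y) = y := by group
    rw [this]
    linarith
  have hsum : ∀ (N : ℕ) (F : G → ℝ), ∑ x, (walkOp f)^[N] F x = ∑ x, F x := by
    intro N F
    induction N with
    | zero => rfl
    | succ N ih =>
      rw [Function.iterate_succ_apply', ← ih]
      simp only [walkOp]
      rw [← Finset.sum_div, Finset.sum_comm]
      have : ∀ i, ∑ x, (walkOp f)^[N] F (x * f i) = ∑ x, (walkOp f)^[N] F x := fun i =>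
        Equiv.sum_comp (Equiv.mulRight (f i)) ((walkOp f)^[N] F)
      simp only [this]
      simp
  -- envelope
  have henv : ∀ k : ℕ, ∃ a b : ℝ, b - a ≤ (1 - δ) ^ k * ((∑ x, |F x|) * 2) ∧
      (∀ x, (walkOp f)^[k * N0] F x ≤ b) ∧ (∀ x, a ≤ (walkOp f)^[k * N0] F x) := by
    intro k
    induction k with
    | zero =>
      refine ⟨-(∑ x, |F x|), ∑ x, |F x|, by simp; linarith, ?_, ?_⟩
      · intro x
        simp only [zero_mul, Function.iterate_zero, id]
        exact (le_abs_self _).trans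
          (Finset.single_le_sum (f := fun x => |F x|) (fun _ _ => abs_nonneg _) (Finset.mem_univ x))
      · intro x
        simp only [zero_mul, Function.iterate_zero, id]
        have := Finset.single_le_sum (f := fun x => |F x|) (fun _ _ => abs_nonneg _)
          (Finset.mem_univ x)
        have h2 := neg_abs_le (F x)
        linarith
    | succ k ih =>
      obtain ⟨a, b, hab, hb, ha⟩ := ih
      obtain ⟨y, hy⟩ := Finite.exists_min ((walkOp f)^[k * N0] F)
      set a' := (walkOp f)^[k * N0] F y with ha'
      refine ⟨a', b - δ * (b - a'), ?_, ?_, ?_⟩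
      · have h1 : a ≤ a' := ha y
        have : b - δ * (b - a') - a' = (1 - δ) * (b - a') := by ring
        rw [this, pow_succ']
        rw [mul_assoc]
        exact mul_le_mul_of_nonneg_left (by linarith) (by linarith)
      · intro x
        rw [add_mul, one_mul, add_comm, Function.iterate_add_apply]
        exact hcon _ _ _ hb ⟨y, le_rfl⟩ x
      · intro x
        rw [add_mul, one_mul, add_comm, Function.iterate_add_apply]
        exact hlb _ _ _ hy x
  have hcG : (0 : ℝ) < Fintype.card G := by exact_mod_cast Fintype.card_pos
  have hfin : ∀ k N, k * N0 ≤ N →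
      |(walkOp f)^[N] F 1 - (∑ x, F x) / Fintype.card G| ≤ (1 - δ) ^ k * ((∑ x, |F x|) * 2) := by
    intro k N hkN
    obtain ⟨a, b, hab, hb, ha⟩ := henv k
    obtain ⟨r, rfl⟩ := Nat.exists_eq_add_of_le hkN
    have hb' : ∀ x, (walkOp f)^[k * N0 + r] F x ≤ b := fun x => by
      rw [add_comm, Function.iterate_add_apply]; exact hub _ _ _ hb x
    have ha' : ∀ x, a ≤ (walkOp f)^[k * N0 + r] F x := fun x => by
      rw [add_comm, Function.iterate_add_apply]; exact hlb _ _ _ ha x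
    have h1 : (∑ x, F x) / Fintype.card G ≤ b := by
      rw [← hsum (k * N0 + r) F, div_le_iff₀ hcG]
      calc _ ≤ ∑ x : G, b := Finset.sum_le_sum fun _ _ => hb' _
        _ = _ := by simp [mul_comm]
    have h2 : a ≤ (∑ x, F x) / Fintype.card G := by
      rw [← hsum (k * N0 + r) F, le_div_iff₀ hcG]
      calc _ = ∑ x : G, a := by simp [mul_comm]
        _ ≤ _ := Finset.sum_le_sum fun _ _ => ha' _
    have h3 := hb' 1
    have h4 := ha' 1
    rw [abs_le]
    constructor <;> linarith
  have hlim : Filter.Tendsto (fun k : ℕ => (1 - δ) ^ k * ((∑ x, |F x|) * 2)) Filter.atTop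
      (nhds 0) := by
    have := (tendsto_pow_atTop_nhds_zero_of_lt_one (r := 1 - δ) (by linarith) (by linarith)).mul_const
      ((∑ x, |F x|) * 2)
    simpa using this
  rw [Metric.tendsto_atTop]
  intro ε hε
  obtain ⟨k, hk⟩ := (hlim.eventually (gt_mem_nhds hε)).exists
  refine ⟨k * N0, fun N hN => ?_⟩
  rw [Real.dist_eq]
  have := hfin k N hN
  rw [walkOp_iterate] at this
  simp only [one_mul] at this
  exact this.trans_lt hk

end Equidistribution


section Generation

open Matrix
open scoped commutatorElement

/-- The subgroup of the symplectic group generated by the block unipotent matrices. -/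
def elemSp (l R : Type*) [DecidableEq l] [Fintype l] [CommRing R] :
    Subgroup (Matrix.symplecticGroup l R) :=
  Subgroup.closure ({M | ∃ S : Matrix l l R, Sᵀ = S ∧ M.1 = fromBlocks 1 S 0 1} ∪
    {M | ∃ S : Matrix l l R, Sᵀ = S ∧ M.1 = fromBlocks 1 0 S 1})

/-- A matrix is (symplectic and) in the elementary subgroup. -/
def InE {l R : Type*} [DecidableEq l] [Fintype l] [CommRing R]
    (M : Matrix (l ⊕ l) (l ⊕ l) R) : Prop :=
  ∃ h : M ∈ Matrix.symplecticGroup l R, (⟨M, h⟩ : Matrix.symplecticGroup l R) ∈ elemSp l R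

variable {l : Type*} [DecidableEq l] [Fintype l]

lemma upper_mem_sp {R : Type*} [CommRing R] {S : Matrix l l R} (hS : Sᵀ = S) :
    fromBlocks 1 S 0 1 ∈ Matrix.symplecticGroup l R := by
  rw [SymplecticGroup.fromBlocks_mem_iff]; simp [hS]

lemma lower_mem_sp {R : Type*} [CommRing R] {S : Matrix l l R} (hS : Sᵀ = S) :
    fromBlocks 1 0 S 1 ∈ Matrix.symplecticGroup l R := by
  rw [SymplecticGroup.fromBlocks_mem_iff]; simp [hS]

lemma InE.mul {R : Type*} [CommRing R] {M N : Matrix (l ⊕ l) (l ⊕ l) R} (hM : InE M) (hN : InE N) :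
    InE (M * N) := by
  obtain ⟨h, h'⟩ := hM
  obtain ⟨k, k'⟩ := hN
  exact ⟨mul_mem h k, mul_mem h' k'⟩

lemma InE.of_mul_left {R : Type*} [CommRing R] {M N : Matrix (l ⊕ l) (l ⊕ l) R} (hM : InE M)
    (hN : N ∈ Matrix.symplecticGroup l R)
    (hMN : InE (M * N)) : InE N := by
  obtain ⟨h, h'⟩ := hM
  obtain ⟨k, k'⟩ := hMN
  refine ⟨hN, ?_⟩
  have := mul_mem (inv_mem h') k'
  convert this using 1
  rw [eq_inv_mul_iff_mul_eq]
  rfl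

lemma InE.of_mul_right {R : Type*} [CommRing R] {M N : Matrix (l ⊕ l) (l ⊕ l) R} (hM : InE M)
    (hN : N ∈ Matrix.symplecticGroup l R)
    (hMN : InE (N * M)) : InE N := by
  obtain ⟨h, h'⟩ := hM
  obtain ⟨k, k'⟩ := hMN
  refine ⟨hN, ?_⟩
  have := mul_mem k' (inv_mem h')
  convert this using 1
  rw [eq_mul_inv_iff_mul_eq]
  rfl

lemma inE_upper {R : Type*} [CommRing R] {S : Matrix l l R} (hS : Sᵀ = S) :
    InE (fromBlocks 1 S 0 1) :=
  ⟨upper_mem_sp hS, Subgroup.subset_closure (Or.inl ⟨S, hS, rfl⟩)⟩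

lemma inE_lower {R : Type*} [CommRing R] {S : Matrix l l R} (hS : Sᵀ = S) :
    InE (fromBlocks 1 0 S 1) :=
  ⟨lower_mem_sp hS, Subgroup.subset_closure (Or.inr ⟨S, hS, rfl⟩)⟩

lemma inE_weyl {R : Type*} [CommRing R] {S : Matrix l l R} (hS : Sᵀ = S) (hd : IsUnit S.det) :
    InE (fromBlocks 0 S (-S⁻¹) 0) := by
  have hi : (-S⁻¹)ᵀ = -S⁻¹ := by rw [transpose_neg, transpose_nonsing_inv, hS]
  have := ((inE_upper hS).mul (inE_lower hi)).mul (inE_upper hS)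
  convert this using 1
  simp [fromBlocks_multiply, mul_nonsing_inv S hd, nonsing_inv_mul S hd]

lemma inE_diag_symm {R : Type*} [CommRing R] {S : Matrix l l R} (hS : Sᵀ = S)
    (hd : IsUnit S.det) : InE (fromBlocks S 0 0 (S⁻¹)ᵀ) := by
  have h1 : ((-1 : Matrix l l R))ᵀ = -1 := by simp
  have h2 : IsUnit (-1 : Matrix l l R).det := by
    rw [det_neg, det_one, mul_one]; exact (isUnit_one.neg).pow _
  have h3 : (-1 : Matrix l l R)⁻¹ = -1 := Matrix.inv_eq_left_inv (by simp)
  have := (inE_weyl hS hd).mul (inE_weyl h1 h2)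
  convert this using 1
  rw [h3, transpose_nonsing_inv, hS]
  simp [fromBlocks_multiply]

lemma inE_diag {F : Type*} [Field F] (A : Matrix l l F) (hA : A.det ≠ 0) :
    InE (fromBlocks A 0 0 (A⁻¹)ᵀ) := by
  have hmul : ∀ A B : Matrix l l F, InE (fromBlocks A 0 0 (A⁻¹)ᵀ) → InE (fromBlocks B 0 0 (B⁻¹)ᵀ) →
      InE (fromBlocks (A * B) 0 0 ((A * B)⁻¹)ᵀ) := by
    intro A B h1 h2
    have := h1.mul h2
    convert this using 1
    simp [fromBlocks_multiply, Matrix.mul_inv_rev, transpose_mul]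
  refine Matrix.diagonal_transvection_induction_of_det_ne_zero
    (fun A => InE (fromBlocks A 0 0 (A⁻¹)ᵀ)) A hA ?_ ?_ ?_
  · intro D hD
    exact inE_diag_symm (by simp) (isUnit_iff_ne_zero.2 hD)
  · rintro ⟨i, j, hij, c⟩
    set P : Matrix l l F := (Equiv.swap i j).toPEquiv.toMatrix with hP
    have hPs : Pᵀ = P := by
      rw [hP, ← PEquiv.toMatrix_symm, ← Equiv.toPEquiv_symm, Equiv.symm_swap]
    have hPP : P * P = 1 := by
      rw [hP, ← PEquiv.toMatrix_trans, ← Equiv.toPEquiv_trans]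
      simp
    have hPd : IsUnit P.det := by
      refine IsUnit.of_mul_eq_one P.det ?_
      rw [← det_mul, hPP, det_one]
    have hT : TransvectionStruct.toMatrix ⟨i, j, hij, c⟩ = (transvection i j c * P) * P := by
      rw [mul_assoc, hPP, mul_one]; rfl
    have hTP : transvection i j c * P = P + Matrix.single i i c := by
      rw [transvection, add_mul, one_mul]
      congr 1
      ext a b
      by_cases hai : a = i
      · subst hai
        rw [Matrix.single_mul_apply_same, hP, PEquiv.toMatrix_toPEquiv_apply]
        simp [Matrix.single_apply, Pi.single_apply, eq_comm]
      · rw [Matrix.single_mul_apply_of_ne _ _ _ _ _ hai, Matrix.single_apply_of_row_ne _ _ _ _]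
        exact fun h => hai h.symm
    rw [hT]
    apply hmul
    · refine inE_diag_symm ?_ ?_
      · rw [hTP, transpose_add, hPs]
        simp
      · rw [det_mul, det_transvection_of_ne _ _ hij, one_mul]
        exact hPd
    · exact inE_diag_symm hPs hPd
  · intro A B _ _ hA hB
    exact hmul A B hA hB

lemma inE_of_isUnit {F : Type*} [Field F] {A B C D : Matrix l l F} (hA : A.det ≠ 0)
    (hM : fromBlocks A B C D ∈ Matrix.symplecticGroup l F) : InE (fromBlocks A B C D) := by
  have hu : IsUnit A.det := isUnit_iff_ne_zero.2 hA
  have hut : IsUnit Aᵀ.det := by rwa [det_transpose]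
  have hr := (SymplecticGroup.fromBlocks_mem_iff.1 hM)
  have hY : (-(C * A⁻¹))ᵀ = -(C * A⁻¹) := by
    rw [transpose_neg, transpose_mul, transpose_nonsing_inv, neg_inj]
    have := congrArg (fun Z => Aᵀ⁻¹ * Z * A⁻¹) hr.1
    rw [← Matrix.mul_assoc, nonsing_inv_mul _ hut, Matrix.one_mul, Matrix.mul_assoc,
      Matrix.mul_assoc, mul_nonsing_inv _ hu, Matrix.mul_one] at this
    exact this.symm
  refine InE.of_mul_left (inE_lower hY) hM ?_
  have hN := mul_mem (inE_lower hY).1 hM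
  have hE : fromBlocks 1 0 (-(C * A⁻¹)) 1 * fromBlocks A B C D
      = fromBlocks A B 0 (-(C * A⁻¹) * B + D) := by
    simp [fromBlocks_multiply, Matrix.mul_assoc, nonsing_inv_mul _ hu]
  rw [hE] at hN ⊢
  generalize -(C * A⁻¹) * B + D = D' at hN ⊢
  have hr' := (SymplecticGroup.fromBlocks_mem_iff.1 hN)
  have hD' : D' = (A⁻¹)ᵀ := by
    rw [transpose_nonsing_inv]
    refine (Matrix.inv_eq_right_inv ?_).symm
    simpa using hr'.2.2
  have hX : (-(A⁻¹ * B))ᵀ = -(A⁻¹ * B) := by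
    rw [transpose_neg, transpose_mul, ← hD', hr'.2.1, hD', transpose_transpose]
  refine InE.of_mul_right (inE_upper hX) hN ?_
  have : fromBlocks A B 0 D' * fromBlocks 1 (-(A⁻¹ * B)) 0 1 = fromBlocks A 0 0 (A⁻¹)ᵀ := by
    simp [fromBlocks_multiply, ← Matrix.mul_assoc, mul_nonsing_inv _ hu, hD']
  rw [this]
  exact inE_diag A hA

lemma exists_coord_transverse {F : Type*} [Field F] {A B C D : Matrix l l F}
    (hM : fromBlocks A B C D ∈ Matrix.symplecticGroup l F) :
    ∃ d : l → F, (∀ i, d i * d i = d i) ∧ ((1 - diagonal d) * A + diagonal d * C).det ≠ 0 := by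
  classical
  obtain ⟨κ, a, ha, hspan, hli⟩ := exists_linearIndependent' F (fun i => A i)
  refine ⟨fun i => if i ∈ Set.range a then 0 else 1, fun i => by simp, ?_⟩
  intro hdet
  obtain ⟨x, hx0, hx⟩ := Matrix.exists_mulVec_eq_zero_iff.2 hdet
  apply hx0
  have hxi : ∀ i, (if i ∈ Set.range a then A i ⬝ᵥ x else C i ⬝ᵥ x) = 0 := by
    intro i
    have := congrFun hx i
    rw [add_mulVec, sub_mul, one_mul, sub_mulVec, ← mulVec_mulVec, ← mulVec_mulVec] at this
    simp only [Pi.add_apply, Pi.sub_apply, mulVec_diagonal, Pi.zero_apply] at this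
    split_ifs at this ⊢ with h
    · simpa [mulVec] using this
    · simpa [mulVec] using this
  have hAx : A *ᵥ x = 0 := by
    have hle : Submodule.span F (Set.range fun i => A i) ≤
        LinearMap.ker (((dotProductBilin F F).flip x : (l → F) →ₗ[F] F)) := by
      rw [← hspan, Submodule.span_le]
      rintro _ ⟨k, rfl⟩
      have := hxi (a k)
      rw [if_pos ⟨k, rfl⟩] at this
      simpa using this
    funext i
    have := hle (Submodule.subset_span ⟨i, rfl⟩)
    simpa [mulVec] using this
  have hCx : ∀ i, i ∉ Set.range a → (C *ᵥ x) i = 0 := by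
    intro i hi
    have := hxi i
    rw [if_neg hi] at this
    exact this
  have hr := (SymplecticGroup.fromBlocks_mem_iff.1 hM).1
  have hv : (C *ᵥ x) ᵥ* A = 0 := by
    rw [← vecMul_transpose, vecMul_vecMul, ← hr, ← vecMul_vecMul, vecMul_transpose, hAx,
      zero_vecMul]
  have hfin : Fintype κ := Fintype.ofInjective a ha
  have hsum : ∑ k, (C *ᵥ x) (a k) • A (a k) = 0 := by
    rw [← hv]
    rw [vecMul_eq_sum]
    rw [← Finset.sum_image (f := fun i => (C *ᵥ x) i • A i) (g := a) (s := Finset.univ)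
      (fun _ _ _ _ h => ha h)]
    refine Finset.sum_subset (Finset.subset_univ _) ?_
    intro i _ hi
    rw [hCx i (by rintro ⟨k, rfl⟩; exact hi (by simp)), zero_smul]
  have hz := Fintype.linearIndependent_iff.1 hli (fun k => (C *ᵥ x) (a k)) hsum
  have hCx0 : C *ᵥ x = 0 := by
    funext i
    by_cases hi : i ∈ Set.range a
    · obtain ⟨k, rfl⟩ := hi
      exact hz k
    · exact hCx i hi
  have hMx : fromBlocks A B C D *ᵥ (Sum.elim x 0) = 0 := by
    rw [fromBlocks_mulVec]
    simp [hAx, hCx0]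
  have hMd := SymplecticGroup.symplectic_det hM
  have := Matrix.eq_zero_of_mulVec_eq_zero hMd.ne_zero hMx
  funext i
  exact congrFun this (Sum.inl i)

lemma elemSp_eq_top (F : Type*) [Field F] : elemSp l F = ⊤ := by
  rw [eq_top_iff]
  rintro ⟨M, hM⟩ -
  suffices InE M from this.2
  obtain ⟨A, B, C, D, rfl⟩ : ∃ A B C D, M = fromBlocks A B C D :=
    ⟨_, _, _, _, (fromBlocks_toBlocks M).symm⟩
  obtain ⟨d, hd, hdet⟩ := exists_coord_transverse hM
  have h1 : (diagonal d)ᵀ = diagonal d := by simp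
  have h2 : (-diagonal d)ᵀ = -diagonal d := by simp
  have h3 : diagonal d * diagonal d = diagonal d := by
    rw [diagonal_mul_diagonal]; congr 1; funext i; exact hd i
  have hw := ((inE_upper h1).mul (inE_lower h2)).mul (inE_upper h1)
  have hw' : fromBlocks 1 (diagonal d) 0 1 * fromBlocks 1 0 (-diagonal d) 1
     * fromBlocks 1 (diagonal d) 0 1
     = fromBlocks (1 - diagonal d) (diagonal d) (-diagonal d) (1 - diagonal d) := by
    simp only [fromBlocks_multiply]
    simp only [Matrix.mul_neg, Matrix.mul_one, Matrix.one_mul, Matrix.mul_zero,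
      add_zero, zero_add, h3, Matrix.add_mul, Matrix.neg_mul, sub_eq_add_neg]
    congr 1 <;> abel
  rw [hw'] at hw
  refine InE.of_mul_left hw hM ?_
  have hN := mul_mem hw.1 hM
  rw [fromBlocks_multiply] at hN ⊢
  exact inE_of_isUnit hdet hN

lemma commutator_sp_eq_top (F : Type*) [Field F] (h2 : (2 : F) ≠ 0) (h3 : (3 : F) ≠ 0) :
    commutator (Matrix.symplecticGroup l F) = ⊤ := by
  have key : ∀ X Y Z : Matrix.symplecticGroup l F, X * Y = Z * Y * X →
      Z ∈ commutator (Matrix.symplecticGroup l F) := by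
    intro X Y Z h
    have : Z = ⁅X, Y⁆ := by
      rw [commutatorElement_def, h]; group
    rw [this, commutator_def]
    exact Subgroup.commutator_mem_commutator (Subgroup.mem_top _) (Subgroup.mem_top _)
  have hD : ∀ c : F, c ≠ 0 → (fromBlocks (c • 1) 0 0 (c⁻¹ • 1) : Matrix (l ⊕ l) (l ⊕ l) F) ∈
      Matrix.symplecticGroup l F := by
    intro c hc
    rw [SymplecticGroup.fromBlocks_mem_iff]
    simp [hc]
  rw [eq_top_iff, ← elemSp_eq_top, elemSp, Subgroup.closure_le]
  rintro ⟨M, hM⟩ (⟨S, hS, hMS⟩ | ⟨S, hS, hMS⟩)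
  · have hS3 : ((3 : F)⁻¹ • S)ᵀ = (3 : F)⁻¹ • S := by rw [transpose_smul, hS]
    refine key ⟨_, hD 2 h2⟩ ⟨_, upper_mem_sp hS3⟩ _ ?_
    apply Subtype.ext
    simp only [Submonoid.coe_mul] at hMS ⊢
    rw [hMS]
    simp only [fromBlocks_multiply]
    simp [smul_smul]
    match_scalars
    field_simp
    norm_num
  · have hS3 : ((3 : F)⁻¹ • S)ᵀ = (3 : F)⁻¹ • S := by rw [transpose_smul, hS]
    refine key ⟨_, hD 2⁻¹ (inv_ne_zero h2)⟩ ⟨_, lower_mem_sp hS3⟩ _ ?_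
    apply Subtype.ext
    simp only [Submonoid.coe_mul] at hMS ⊢
    rw [hMS]
    simp only [fromBlocks_multiply]
    simp [smul_smul]
    match_scalars
    field_simp
    norm_num

end Generation


section Reduction

open Matrix
open scoped commutatorElement

/-- Reduction modulo `p`. -/
def redSp (l : Type*) [DecidableEq l] [Fintype l] (p : ℕ) :
    Matrix.symplecticGroup l ℤ →* Matrix.symplecticGroup l (ZMod p) where
  toFun M := ⟨M.1.map (Int.castRingHom (ZMod p)), SymplecticGroup.map_mem M.2 _⟩
  map_one' := by apply Subtype.ext; simp
  map_mul' M N := by apply Subtype.ext; exact Matrix.map_mul (f := Int.castRingHom (ZMod p))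

lemma exists_crt {ι : Type*} [Fintype ι] [DecidableEq ι] (p : ι → ℕ) (hp : ∀ i, (p i).Prime)
    (hinj : Function.Injective p) (i : ι) :
    ∃ e : ℤ, (e : ZMod (p i)) = 1 ∧ ∀ j, j ≠ i → (e : ZMod (p j)) = 0 := by
  have := Fact.mk (hp i)
  set n := ∏ j ∈ Finset.univ.erase i, p j with hn
  have hcop : (n : ZMod (p i)) ≠ 0 := by
    rw [Ne, ZMod.natCast_eq_zero_iff, hn, (hp i).prime.dvd_finsetProd_iff]
    rintro ⟨j, hj, hdvd⟩
    rw [Nat.prime_dvd_prime_iff_eq (hp i) (hp j)] at hdvd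
    exact (Finset.ne_of_mem_erase hj) (hinj hdvd).symm
  refine ⟨(n : ℤ) * ((n : ZMod (p i))⁻¹).val, ?_, ?_⟩
  · push_cast
    rw [ZMod.natCast_zmod_val, mul_inv_cancel₀ hcop]
  · intro j hj
    push_cast
    have : (n : ZMod (p j)) = 0 := by
      rw [ZMod.natCast_eq_zero_iff, hn]
      exact Finset.dvd_prod_of_mem p (by simp [hj])
    rw [this, zero_mul]

lemma pi_redSp_surjective {l : Type*} [DecidableEq l] [Fintype l] {ι : Type*} [Fintype ι]
    (p : ι → ℕ) (hp : ∀ i, (p i).Prime)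
    (hinj : Function.Injective p) :
    Function.Surjective (MonoidHom.pi fun i => redSp l (p i)) := by
  classical
  rw [← MonoidHom.range_eq_top, eq_top_iff]
  intro x _
  refine Subgroup.pi_mem_of_mulSingle_mem x fun i => ?_
  have := Fact.mk (hp i)
  have hle : elemSp l (ZMod (p i)) ≤ (MonoidHom.pi fun i => redSp l (p i)).range.comap
      (MonoidHom.mulSingle (fun i => Matrix.symplecticGroup l (ZMod (p i))) i) := by
    obtain ⟨e, he1, he0⟩ := exists_crt p hp hinj i
    have hlift : ∀ S : Matrix l l (ZMod (p i)), Sᵀ = S → ∃ S' : Matrix l l ℤ, S'ᵀ = S' ∧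
        S'.map (Int.castRingHom (ZMod (p i))) = S ∧
        ∀ j, j ≠ i → S'.map (Int.castRingHom (ZMod (p j))) = 0 := by
      intro S hS
      refine ⟨Matrix.of fun a b => e * ((S a b).val : ℤ), ?_, ?_, ?_⟩
      · ext a b
        have := congrFun (congrFun hS a) b
        rw [transpose_apply] at this
        simp only [transpose_apply, of_apply]
        rw [this]
      · ext a b
        simp [he1]
      · intro j hj
        ext a b
        simp [he0 j hj]
    rw [elemSp, Subgroup.closure_le]
    rintro ⟨M, hM⟩ (⟨S, hS, hMS⟩ | ⟨S, hS, hMS⟩)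
    · obtain ⟨S', hS', h1, h0⟩ := hlift S hS
      refine ⟨⟨_, upper_mem_sp hS'⟩, ?_⟩
      funext j
      by_cases hj : j = i
      · subst hj
        apply Subtype.ext
        simp only at hMS
        simp [redSp, hMS, Matrix.fromBlocks_map]
        exact h1
      · apply Subtype.ext
        simp only [MonoidHom.pi_apply, redSp, MonoidHom.coe_mk, OneHom.coe_mk,
          MonoidHom.mulSingle_apply, Matrix.fromBlocks_map, Pi.mulSingle_eq_of_ne hj, h0 j hj]
        simp
    · obtain ⟨S', hS', h1, h0⟩ := hlift S hS
      refine ⟨⟨_, lower_mem_sp hS'⟩, ?_⟩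
      funext j
      by_cases hj : j = i
      · subst hj
        apply Subtype.ext
        simp only at hMS
        simp [redSp, hMS, Matrix.fromBlocks_map]
        exact h1
      · apply Subtype.ext
        simp only [MonoidHom.pi_apply, redSp, MonoidHom.coe_mk, OneHom.coe_mk,
          MonoidHom.mulSingle_apply, Matrix.fromBlocks_map, Pi.mulSingle_eq_of_ne hj, h0 j hj]
        simp
  rw [elemSp_eq_top] at hle
  exact hle (Subgroup.mem_top (x i))

lemma commutator_pi_eq_top {ι : Type*} [Finite ι] {G : ι → Type*} [∀ i, Group (G i)]
    (h : ∀ i, commutator (G i) = ⊤) : commutator (∀ i, G i) = ⊤ := by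
  classical
  rw [eq_top_iff]
  intro x _
  refine Subgroup.pi_mem_of_mulSingle_mem x fun i => ?_
  have hle : commutator (G i) ≤ (commutator (∀ i, G i)).comap (MonoidHom.mulSingle G i) := by
    rw [commutator_def, Subgroup.commutator_le]
    intro a _ b _
    rw [Subgroup.mem_comap, map_commutatorElement, commutator_def]
    exact Subgroup.commutator_mem_commutator (Subgroup.mem_top _) (Subgroup.mem_top _)
  rw [h] at hle
  exact hle (Subgroup.mem_top (x i))

end Reduction


section Torus

open Matrix Module

lemma exists_conj (p g : ℕ) [Fact p.Prime] (K : Type*) [Field K] [Finite K] [Algebra (ZMod p) K]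
    (hK : finrank (ZMod p) K = 2 * g) :
    ∃ σ : K ≃ₐ[ZMod p] K, (∀ x, σ x = x ^ (p ^ g)) ∧ ∀ x, σ (σ x) = x := by
  have h1 : ∀ x, ((FiniteField.frobeniusAlgEquivOfAlgebraic (ZMod p) K) ^ g) x = x ^ (p ^ g) := by
    intro x
    rw [AlgEquiv.coe_pow, FiniteField.coe_frobeniusAlgEquivOfAlgebraic_iterate, ZMod.card]
  refine ⟨(FiniteField.frobeniusAlgEquivOfAlgebraic (ZMod p) K) ^ g, h1, ?_⟩
  intro x
  rw [h1, h1, ← pow_mul, ← pow_add, ← two_mul, ← hK]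
  have := Fintype.ofFinite K
  have h2 := FiniteField.pow_card x
  rwa [← FiniteField.pow_finrank_eq_card p K] at h2

lemma exists_sympl_basis (p g : ℕ) [Fact p.Prime] (hp : p ≠ 2) (hg : 1 ≤ g)
    (K : Type*) [Field K] [Finite K] [Algebra (ZMod p) K]
    (hK : finrank (ZMod p) K = 2 * g) (σ : K ≃ₐ[ZMod p] K) (hσ : ∀ x, σ x = x ^ (p ^ g))
    (hσσ : ∀ x, σ (σ x) = x) :
    ∃ (c : K) (b : Basis (Fin g ⊕ Fin g) (ZMod p) K), c ≠ 0 ∧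
      ∀ i j, Algebra.trace (ZMod p) K (c * b i * σ (b j)) = Matrix.J (Fin g) (ZMod p) i j := by
  have h2 : (2 : ZMod p) ≠ 0 := by
    have : ((2 : ℕ) : ZMod p) ≠ 0 := by
      rw [Ne, ZMod.natCast_eq_zero_iff]
      intro h
      exact hp ((Nat.prime_dvd_prime_iff_eq Fact.out Nat.prime_two).1 h)
    simpa using this
  have h2K : (2 : K) ≠ 0 := by
    have := (map_ne_zero (algebraMap (ZMod p) K)).2 h2
    rwa [map_ofNat] at this
  have hg0 : g ≠ 0 := by omega
  have := Fintype.ofFinite K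
  have hcard : Fintype.card K = p ^ (2 * g) := by rw [← hK, FiniteField.pow_finrank_eq_card p K]
  -- an element not fixed by σ
  obtain ⟨x, hx⟩ : ∃ x, σ x ≠ x := by
    by_contra! hcon
    have hp1 : 1 < p := (Fact.out : p.Prime).one_lt
    have hpg : 1 < p ^ g := Nat.one_lt_pow hg0 hp1
    have hdeg := FiniteField.X_pow_card_sub_X_natDegree_eq K hpg
    have hne := FiniteField.X_pow_card_sub_X_ne_zero K hpg
    have hle := Polynomial.card_le_degree_of_subset_roots
      (p := (Polynomial.X ^ (p ^ g) - Polynomial.X : Polynomial K)) (Z := Finset.univ) (by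
        intro y _
        rw [Polynomial.mem_roots hne]
        simp [← hσ, hcon])
    rw [hdeg, Finset.card_univ, hcard] at hle
    have : p ^ g < p ^ (2 * g) := Nat.pow_lt_pow_right hp1 (by omega)
    omega
  set θ := x - σ x with hθ
  have hθ0 : θ ≠ 0 := fun h => hx (sub_eq_zero.1 h).symm
  have hσθ : σ θ = -θ := by rw [hθ, map_sub, hσσ]; ring
  have htr : ∀ z, Algebra.trace (ZMod p) K (σ z) = Algebra.trace (ZMod p) K z := fun z =>
    Algebra.trace_eq_of_algEquiv σ z
  have hanti : ∀ z, σ z = -z → Algebra.trace (ZMod p) K z = 0 := by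
    intro z hz
    have := htr z
    rw [hz, map_neg] at this
    have h3 : (2 : ZMod p) * Algebra.trace (ZMod p) K z = 0 := by linear_combination -this
    exact (mul_eq_zero.1 h3).resolve_left h2
  -- the subfield
  let L := GaloisField p g
  have hL : finrank (ZMod p) L = g := GaloisField.finrank p hg0
  have hfinL : Finite L := Module.finite_of_finite (ZMod p)
  obtain ⟨f⟩ := FiniteField.nonempty_algHom_of_finrank_dvd (F := ZMod p) (K := L) (L := K)
    (by rw [hL, hK]; exact dvd_mul_left _ _)
  let _ : Algebra L K := f.toRingHom.toAlgebra
  have htower : IsScalarTower (ZMod p) L K := IsScalarTower.of_algebraMap_eq fun z => (f.commutes z).symm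
  have hσL : ∀ a : L, σ (algebraMap L K a) = algebraMap L K a := by
    intro a
    have := Fintype.ofFinite L
    rw [hσ, ← map_pow]
    have h3 := FiniteField.pow_card a
    rw [← FiniteField.pow_finrank_eq_card p L, hL] at h3
    rw [h3]
  have hKL : finrank L K = 2 := by
    have := finrank_mul_finrank (ZMod p) L K
    rw [hL, hK, mul_comm] at this
    exact Nat.eq_of_mul_eq_mul_right (by omega) this
  have htrL : ∀ a : L, Algebra.trace (ZMod p) K (algebraMap L K a)
      = 2 * Algebra.trace (ZMod p) L a := by
    intro a
    rw [← Algebra.trace_trace (S := L), Algebra.trace_algebraMap, hKL, map_nsmul]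
    simp
  let e : Basis (Fin g) (ZMod p) L := Module.finBasisOfFinrankEq (ZMod p) L hL
  let v : Fin g ⊕ Fin g → K := Sum.elim (fun i => algebraMap L K (e i))
    (fun i => θ * algebraMap L K (e.traceDual i))
  let c : K := (2 * θ)⁻¹
  have hσ2 : σ 2 = 2 := by simpa using map_natCast σ 2
  have hσc : σ c = -c := by
    simp only [c]
    rw [map_inv₀, map_mul, hσ2, hσθ, mul_neg, inv_neg]
  have hc0 : c ≠ 0 := by simp [c, hθ0, h2K]
  have hgram : ∀ i j, Algebra.trace (ZMod p) K (c * v i * σ (v j))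
      = Matrix.J (Fin g) (ZMod p) i j := by
    have hco : ∀ y : K, c * θ * y * 2 = y := by
      intro y; simp only [c]; field_simp
    have hmain : ∀ a b : L, Algebra.trace (ZMod p) K (c * θ * algebraMap L K (a * b))
        = Algebra.trace (ZMod p) L (a * b) := by
      intro a b
      have h4 := htrL (a * b)
      rw [← hco (algebraMap L K (a * b)), mul_two, map_add, ← two_mul] at h4
      exact mul_left_cancel₀ h2 h4
    rintro (i | i) (j | j)
    · simp only [v, Sum.elim_inl, Matrix.J, fromBlocks_apply₁₁, Matrix.zero_apply, hσL]
      apply hanti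
      simp [map_mul, hσL, hσc]
    · simp only [v, Sum.elim_inl, Sum.elim_inr, Matrix.J, fromBlocks_apply₁₂, map_mul, hσL, hσθ]
      rw [show c * algebraMap L K (e i) * (-θ * algebraMap L K (e.traceDual j))
        = -(c * θ * algebraMap L K (e i * e.traceDual j)) by rw [map_mul]; ring,
        map_neg, hmain, Basis.trace_mul_traceDual]
      simp [Matrix.one_apply]
    · simp only [v, Sum.elim_inl, Sum.elim_inr, Matrix.J, fromBlocks_apply₂₁, hσL]
      rw [show c * (θ * algebraMap L K (e.traceDual i)) * algebraMap L K (e j)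
        = (c * θ * algebraMap L K (e.traceDual i * e j)) by rw [map_mul]; ring,
        hmain, Basis.trace_traceDual_mul]
      simp [Matrix.one_apply, eq_comm]
    · simp only [v, Sum.elim_inr, Matrix.J, fromBlocks_apply₂₂, Matrix.zero_apply]
      apply hanti
      simp only [map_mul, hσL, hσc, hσθ, map_neg]
      ring
  have hli : LinearIndependent (ZMod p) v := by
    rw [Fintype.linearIndependent_iff]
    intro w hw
    have h5 : w ᵥ* Matrix.J (Fin g) (ZMod p) = 0 := by
      funext j
      have h6 : Algebra.trace (ZMod p) K (c * (∑ i, w i • v i) * σ (v j)) = 0 := by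
        rw [hw]; simp
      rw [Finset.mul_sum, Finset.sum_mul, map_sum] at h6
      rw [Pi.zero_apply, ← h6]
      simp only [vecMul, dotProduct]
      refine Finset.sum_congr rfl fun i _ => ?_
      rw [mul_smul_comm, smul_mul_assoc, map_smul, hgram, smul_eq_mul]
    have h7 := Matrix.eq_zero_of_vecMul_eq_zero (Matrix.isUnit_det_J (Fin g) (ZMod p)).ne_zero h5
    intro i
    exact congrFun h7 i
  refine ⟨c, basisOfLinearIndependentOfCardEqFinrank' v hli (by simp [hK]; omega), hc0, ?_⟩
  intro i j
  rw [coe_basisOfLinearIndependentOfCardEqFinrank']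
  exact hgram i j

end Torus


section TorusCount

open Matrix Module

variable {p g : ℕ} [Fact p.Prime] {K : Type*} [Field K] [Finite K] [Algebra (ZMod p) K]

lemma toMatrix_mem_sp_iff (σ : K ≃ₐ[ZMod p] K) (c : K) (b : Basis (Fin g ⊕ Fin g) (ZMod p) K)
    (hb : ∀ i j, Algebra.trace (ZMod p) K (c * b i * σ (b j)) = Matrix.J (Fin g) (ZMod p) i j)
    (φ : K →ₗ[ZMod p] K) :
    LinearMap.toMatrix b b φ ∈ Matrix.symplecticGroup (Fin g) (ZMod p) ↔
      ∀ x y, Algebra.trace (ZMod p) K (c * φ x * σ (φ y))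
        = Algebra.trace (ZMod p) K (c * x * σ y) := by
  let B : LinearMap.BilinForm (ZMod p) K :=
    LinearMap.BilinForm.comp (Algebra.traceForm (ZMod p) K) (LinearMap.mulLeft (ZMod p) c)
      σ.toLinearMap
  have hB : ∀ x y, B x y = Algebra.trace (ZMod p) K (c * x * σ y) := fun x y => by
    simp [B, Algebra.traceForm_apply]
  have hJ : LinearMap.BilinForm.toMatrix b B = Matrix.J (Fin g) (ZMod p) := by
    ext i j
    rw [LinearMap.BilinForm.toMatrix_apply, hB, hb]
  rw [SymplecticGroup.mem_iff', ← hJ, ← LinearMap.BilinForm.toMatrix_comp b b,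
    (LinearMap.BilinForm.toMatrix b).injective.eq_iff, LinearMap.ext_iff₂]
  simp only [LinearMap.BilinForm.comp_apply, hB]

lemma leftMulMatrix_mem_sp_iff (σ : K ≃ₐ[ZMod p] K) (c : K) (hc : c ≠ 0)
    (b : Basis (Fin g ⊕ Fin g) (ZMod p) K)
    (hb : ∀ i j, Algebra.trace (ZMod p) K (c * b i * σ (b j)) = Matrix.J (Fin g) (ZMod p) i j)
    (u : K) :
    Algebra.leftMulMatrix b u ∈ Matrix.symplecticGroup (Fin g) (ZMod p) ↔ u * σ u = 1 := by
  have : Algebra.leftMulMatrix b u = LinearMap.toMatrix b b (LinearMap.mulLeft (ZMod p) u) := rfl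
  rw [this, toMatrix_mem_sp_iff σ c b hb]
  constructor
  · intro h
    have h1 : ∀ x, Algebra.trace (ZMod p) K ((c * (u * σ u - 1)) * x) = 0 := by
      intro x
      have := h x 1
      simp only [LinearMap.mulLeft_apply, mul_one, map_one] at this
      rw [← sub_eq_zero, ← map_sub] at this
      rw [← this]
      congr 1
      ring
    by_contra hne
    have hne' : c * (u * σ u - 1) ≠ 0 := mul_ne_zero hc (sub_ne_zero.2 hne)
    obtain ⟨z, hz⟩ := Algebra.trace_surjective (ZMod p) K 1
    have h2 := h1 ((c * (u * σ u - 1))⁻¹ * z)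
    rw [mul_inv_cancel_left₀ hne', hz] at h2
    exact one_ne_zero h2
  · intro h x y
    simp only [LinearMap.mulLeft_apply, map_mul]
    congr 1
    linear_combination (c * x * σ y) * h

lemma exists_of_commute_leftMul (b : Basis (Fin g ⊕ Fin g) (ZMod p) K) (u : K)
    (hu : IntermediateField.adjoin (ZMod p) {u} = ⊤)
    (N : Matrix (Fin g ⊕ Fin g) (Fin g ⊕ Fin g) (ZMod p))
    (hN : N * Algebra.leftMulMatrix b u = Algebra.leftMulMatrix b u * N) :
    ∃ v, N = Algebra.leftMulMatrix b v := by
  obtain ⟨φ, rfl⟩ := (LinearMap.toMatrix b b).surjective N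
  have hL : Algebra.leftMulMatrix b u = LinearMap.toMatrix b b (LinearMap.mulLeft (ZMod p) u) := rfl
  rw [hL, ← LinearMap.toMatrix_mul, ← LinearMap.toMatrix_mul,
    (LinearMap.toMatrix b b).injective.eq_iff] at hN
  have hu' : Algebra.adjoin (ZMod p) {u} = ⊤ := by
    rw [← IntermediateField.adjoin_simple_toSubalgebra_of_isAlgebraic
      (Algebra.IsAlgebraic.isAlgebraic u), hu]
    rfl
  have hcomm : ∀ y x, φ (y * x) = y * φ x := by
    intro y
    have hy : y ∈ Algebra.adjoin (ZMod p) {u} := by rw [hu']; trivial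
    induction hy using Algebra.adjoin_induction with
    | mem y hy =>
      rw [Set.mem_singleton_iff] at hy
      subst hy
      intro x
      exact LinearMap.congr_fun hN x
    | algebraMap r => intro x; rw [← Algebra.smul_def, map_smul, Algebra.smul_def]
    | add y z _ _ hy hz => intro x; rw [add_mul, map_add, hy, hz, add_mul]
    | mul y z _ _ hy hz => intro x; rw [mul_assoc, hy, hz, mul_assoc]
  refine ⟨φ 1, ?_⟩
  change _ = LinearMap.toMatrix b b (LinearMap.mulLeft (ZMod p) (φ 1))
  congr 1
  ext x
  rw [LinearMap.mulLeft_apply, mul_comm, ← hcomm, mul_one]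

lemma charpoly_leftMul_eq (b : Basis (Fin g ⊕ Fin g) (ZMod p) K) (u : K)
    (hu : IntermediateField.adjoin (ZMod p) {u} = ⊤) :
    (Algebra.leftMulMatrix b u).charpoly = minpoly (ZMod p) u := by
  apply Polynomial.eq_of_monic_of_dvd_of_natDegree_le (minpoly.monic (IsIntegral.of_finite _ u))
    (Matrix.charpoly_monic _)
  · apply minpoly.dvd
    apply Algebra.leftMulMatrix_injective b
    rw [← Polynomial.aeval_algHom_apply, Matrix.aeval_self_charpoly, map_zero]
  · rw [Matrix.charpoly_natDegree_eq_dim,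
      (Field.primitive_element_iff_minpoly_natDegree_eq (ZMod p) u).1 hu, finrank_eq_card_basis b]

lemma conj_count (hK : finrank (ZMod p) K = 2 * g)
    (σ : K ≃ₐ[ZMod p] K) (hσ : ∀ x, σ x = x ^ (p ^ g)) (c : K) (hc : c ≠ 0)
    (b : Basis (Fin g ⊕ Fin g) (ZMod p) K)
    (hb : ∀ i j, Algebra.trace (ZMod p) K (c * b i * σ (b j)) = Matrix.J (Fin g) (ZMod p) i j)
    (X : Finset K) (hX : ∀ u ∈ X, u ^ (p ^ g + 1) = 1 ∧ IntermediateField.adjoin (ZMod p) {u} = ⊤)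
    (Good : Finset (Matrix.symplecticGroup (Fin g) (ZMod p)))
    (hGood : ∀ M : Matrix.symplecticGroup (Fin g) (ZMod p), ∀ u ∈ X,
      M.1.charpoly = (Algebra.leftMulMatrix b u).charpoly → M ∈ Good) :
    Nat.card (Matrix.symplecticGroup (Fin g) (ZMod p)) * X.card ≤
      ((p ^ g + 1) * (2 * g)) * Good.card := by
  classical
  have hnorm : ∀ u : K, u * σ u = u ^ (p ^ g + 1) := fun u => by rw [hσ, pow_succ']
  have hmem : ∀ u ∈ X, Algebra.leftMulMatrix b u ∈ Matrix.symplecticGroup (Fin g) (ZMod p) := by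
    intro u hu
    rw [leftMulMatrix_mem_sp_iff σ c hc b hb, hnorm]
    exact (hX u hu).1
  have : Fintype (Matrix.symplecticGroup (Fin g) (ZMod p)) := Fintype.ofFinite _
  let t : X → Matrix.symplecticGroup (Fin g) (ZMod p) := fun u => ⟨_, hmem u.1 u.2⟩
  let f : Matrix.symplecticGroup (Fin g) (ZMod p) × X → Matrix.symplecticGroup (Fin g) (ZMod p) :=
    fun z => z.1 * t z.2 * z.1⁻¹
  have hcp : ∀ z, (f z).1.charpoly = minpoly (ZMod p) z.2.1 := by
    rintro ⟨γ, u⟩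
    rw [← charpoly_leftMul_eq b u.1 (hX u.1 u.2).2]
    change (γ.1 * (t u).1 * (γ⁻¹).1).charpoly = (t u).1.charpoly
    rw [Matrix.charpoly_mul_comm, ← Matrix.mul_assoc]
    have : (γ⁻¹).1 * γ.1 = 1 := congrArg Subtype.val (inv_mul_cancel γ)
    rw [this, Matrix.one_mul]
  have hfib : ∀ a ∈ Finset.univ.image f, (Finset.univ.filter fun z => f z = a).card
      ≤ (p ^ g + 1) * (2 * g) := by
    intro a ha
    obtain ⟨z0, -, rfl⟩ := Finset.mem_image.1 ha
    refine (Finset.card_le_mul_card_image (f := Prod.snd) _ (p ^ g + 1) ?_).trans ?_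
    · intro u hu
      obtain ⟨⟨γ1, u'⟩, hz1, rfl⟩ := Finset.mem_image.1 hu
      simp only
      rw [Finset.mem_filter] at hz1
      -- injection to roots of unity
      have hz : ∀ z : Matrix.symplecticGroup (Fin g) (ZMod p) × X, f z = f z0 → z.2 = u' →
          ∃ v : K, (γ1⁻¹ * z.1).1 = Algebra.leftMulMatrix b v := by
        rintro ⟨γ, u⟩ h1 h2
        simp only at h2
        subst h2
        apply exists_of_commute_leftMul b u.1 (hX u.1 u.2).2
        have h3 : γ * t u * γ⁻¹ = γ1 * t u * γ1⁻¹ := h1.trans hz1.2.symm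
        have h4 : (γ1⁻¹ * γ) * t u = t u * (γ1⁻¹ * γ) := by
          have h5 : γ * t u = γ1 * t u * γ1⁻¹ * γ := by rw [← h3]; group
          rw [mul_assoc, h5]; group
        exact congrArg Subtype.val h4
      choose! v hv using hz
      have hmaps : ∀ z ∈ Finset.univ.filter (fun z => f z = f z0) |>.filter (fun z => z.2 = u'),
          v z ∈ (Polynomial.nthRoots (p ^ g + 1) (1 : K)).toFinset := by
        intro z hz
        rw [Finset.mem_filter, Finset.mem_filter] at hz
        rw [Multiset.mem_toFinset, Polynomial.mem_nthRoots (Nat.succ_pos _), ← hnorm,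
          ← leftMulMatrix_mem_sp_iff σ c hc b hb, ← hv z hz.1.2 hz.2]
        exact (γ1⁻¹ * z.1).2
      have hinj : Set.InjOn v
          (Finset.univ.filter (fun z => f z = f z0) |>.filter (fun z => z.2 = u')) := by
        intro z hz z' hz' h
        rw [Finset.mem_coe, Finset.mem_filter, Finset.mem_filter] at hz hz'
        have h1 := hv z hz.1.2 hz.2
        rw [h, ← hv z' hz'.1.2 hz'.2] at h1
        have h2 : z.1 = z'.1 := mul_left_cancel (Subtype.ext h1)
        exact Prod.ext h2 (hz.2.trans hz'.2.symm)
      refine (Finset.card_le_card_of_injOn v hmaps hinj).trans ?_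
      exact (Multiset.toFinset_card_le _).trans (Polynomial.card_nthRoots _ _)
    · apply Nat.mul_le_mul_left
      have hsub : ((Finset.univ.filter fun z => f z = f z0).image Prod.snd).map
          (Function.Embedding.subtype _) ⊆ ((minpoly (ZMod p) z0.2.1).aroots K).toFinset := by
        intro u hu
        rw [Finset.mem_map] at hu
        obtain ⟨u, hu, rfl⟩ := hu
        rw [Finset.mem_image] at hu
        obtain ⟨z, hz, rfl⟩ := hu
        rw [Finset.mem_filter] at hz
        have := hcp z
        rw [hz.2, hcp z0] at this
        rw [Multiset.mem_toFinset, Polynomial.mem_aroots]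
        refine ⟨minpoly.ne_zero (IsIntegral.of_finite _ _), ?_⟩
        rw [this]
        exact minpoly.aeval _ _
      have := Finset.card_le_card hsub
      rw [Finset.card_map] at this
      refine this.trans ((Multiset.toFinset_card_le _).trans ?_)
      refine (Polynomial.card_roots' _).trans ?_
      rw [Polynomial.natDegree_map,
        (Field.primitive_element_iff_minpoly_natDegree_eq (ZMod p) z0.2.1).1 (hX _ z0.2.2).2, hK]
  have h1 := Finset.card_le_mul_card_image _ _ hfib
  rw [Finset.card_univ, Fintype.card_prod, Fintype.card_coe, ← Nat.card_eq_fintype_card] at h1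
  refine h1.trans (Nat.mul_le_mul_left _ (Finset.card_le_card ?_))
  intro a ha
  obtain ⟨z, -, rfl⟩ := Finset.mem_image.1 ha
  apply hGood _ z.2.1 z.2.2
  rw [hcp, charpoly_leftMul_eq b _ (hX _ z.2.2).2]

end TorusCount


section FieldCount

open Module Polynomial

variable {p g : ℕ} [Fact p.Prime] {K : Type*} [Field K] [Finite K] [Algebra (ZMod p) K]

lemma card_norm_one (hg : 1 ≤ g) (hK : finrank (ZMod p) K = 2 * g) :
    ∃ T : Finset K, (∀ u, u ∈ T ↔ u ^ (p ^ g + 1) = 1) ∧ T.card = p ^ g + 1 := by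
  classical
  have hp1 : 1 < p := (Fact.out : p.Prime).one_lt
  have hcard : Nat.card K = p ^ (2 * g) := by
    rw [Module.natCard_eq_pow_finrank (K := ZMod p), hK, Nat.card_zmod]
  have : Fintype K := Fintype.ofFinite K
  obtain ⟨ζ, hζ⟩ := IsCyclic.exists_ofOrder_eq_natCard (α := Kˣ)
  have h1 : Nat.card Kˣ = (p ^ g - 1) * (p ^ g + 1) := by
    have h := Nat.sq_sub_sq (p ^ g) 1
    rw [one_pow, ← pow_mul, mul_comm g 2] at h
    rw [Nat.card_units, hcard, h, mul_comm]
  have hq : 1 < p ^ g := Nat.one_lt_pow (by omega) hp1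
  have h2 : IsPrimitiveRoot ζ ((p ^ g - 1) * (p ^ g + 1)) := by
    rw [← h1, ← hζ]; exact IsPrimitiveRoot.orderOf ζ
  have h3 : IsPrimitiveRoot (ζ ^ (p ^ g - 1)) (p ^ g + 1) :=
    h2.pow (Nat.mul_pos (by omega) (by omega)) rfl
  have h4 : IsPrimitiveRoot ((ζ ^ (p ^ g - 1) : Kˣ) : K) (p ^ g + 1) :=
    IsPrimitiveRoot.coe_units_iff.2 h3
  refine ⟨(nthRoots (p ^ g + 1) (1 : K)).toFinset, fun u => ?_, ?_⟩
  · rw [Multiset.mem_toFinset, mem_nthRoots (Nat.succ_pos _)]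
  · rw [Multiset.toFinset_card_of_nodup (h4.nthRoots_nodup one_ne_zero), h4.card_nthRoots_one]

lemma card_subfield_le (hK : finrank (ZMod p) K = 2 * g) :
    ∃ B : Finset K, (∀ u, u ^ (p ^ g + 1) = 1 → IntermediateField.adjoin (ZMod p) {u} ≠ ⊤ → u ∈ B)
      ∧ B.card ≤ 2 + g * p ^ (g - 1) := by
  classical
  have hp1 : 1 < p := (Fact.out : p.Prime).one_lt
  refine ⟨(X ^ 2 - 1 : K[X]).roots.toFinset ∪
    (Finset.Ico 1 g).biUnion fun m => (X ^ p ^ m - X : K[X]).roots.toFinset, ?_, ?_⟩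
  · intro u hu hne
    have hu0 : u ≠ 0 := by rintro rfl; simp at hu
    set m := finrank (ZMod p) (IntermediateField.adjoin (ZMod p) {u}) with hm
    have hm0 : 0 < m := finrank_pos
    have hmul := finrank_mul_finrank (ZMod p) (IntermediateField.adjoin (ZMod p) {u}) K
    rw [hK, ← hm] at hmul
    have hr : finrank (IntermediateField.adjoin (ZMod p) {u}) K ≠ 1 := by
      intro h
      exact hne (IntermediateField.finrank_eq_one_iff_eq_top.1 h)
    have hr0 : 0 < finrank (IntermediateField.adjoin (ZMod p) {u}) K := finrank_pos
    have hmg : m ≤ g := by nlinarith [show 2 ≤ finrank (IntermediateField.adjoin (ZMod p) {u}) K by omega]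
    have hpow : u ^ p ^ m = u := by
      have : Fintype (IntermediateField.adjoin (ZMod p) {u}) := Fintype.ofFinite _
      have h := FiniteField.pow_card
        (⟨u, IntermediateField.mem_adjoin_simple_self _ u⟩ : IntermediateField.adjoin (ZMod p) {u})
      rw [Fintype.card_eq_nat_card, Module.natCard_eq_pow_finrank (K := ZMod p), ← hm,
        Nat.card_zmod] at h
      exact congrArg Subtype.val h
    rw [Finset.mem_union]
    rcases hmg.eq_or_lt with h | h
    · left
      rw [h] at hpow
      rw [pow_succ, hpow] at hu
      have h0 : (X ^ 2 - 1 : K[X]) ≠ 0 := by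
        have := X_pow_sub_C_ne_zero (n := 2) (by norm_num) (1 : K)
        rwa [C_1] at this
      rw [Multiset.mem_toFinset, mem_roots h0]
      simp [IsRoot, sq, hu]
    · right
      rw [Finset.mem_biUnion]
      refine ⟨m, Finset.mem_Ico.2 ⟨hm0, h⟩, ?_⟩
      rw [Multiset.mem_toFinset, mem_roots (FiniteField.X_pow_card_pow_sub_X_ne_zero K (by omega) hp1)]
      simp [IsRoot, hpow]
  · refine (Finset.card_union_le _ _).trans (Nat.add_le_add ?_ ?_)
    · refine (Multiset.toFinset_card_le _).trans ((card_roots' _).trans ?_)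
      have := natDegree_X_pow_sub_C (R := K) (n := 2) (r := 1)
      rw [C_1] at this
      exact this.le
    · refine (Finset.card_biUnion_le_card_mul _ _ (p ^ (g - 1)) ?_).trans ?_
      · intro m hm
        rw [Finset.mem_Ico] at hm
        refine (Multiset.toFinset_card_le _).trans ((card_roots' _).trans ?_)
        rw [FiniteField.X_pow_card_pow_sub_X_natDegree_eq K (by omega) hp1]
        exact Nat.pow_le_pow_right (by omega) (by omega)
      · apply Nat.mul_le_mul_right
        simp

lemma card_trace_le (hg : 1 ≤ g) (hK : finrank (ZMod p) K = 2 * g) (t : ZMod p) :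
    ∃ B : Finset K, (∀ u : K, u ^ (p ^ g + 1) = 1 → Algebra.trace (ZMod p) K u = t → u ∈ B)
      ∧ B.card ≤ 2 * p ^ (g - 1) := by
  classical
  have hp1 : 1 < p := (Fact.out : p.Prime).one_lt
  let P : K[X] := ∑ i ∈ Finset.range g, (X ^ (p ^ (g - 1) + p ^ i) + X ^ (p ^ (g - 1) - p ^ i))
    - C (algebraMap (ZMod p) K t) * X ^ (p ^ (g - 1))
  have hle : ∀ i ∈ Finset.range g, p ^ i ≤ p ^ (g - 1) := fun i hi =>
    Nat.pow_le_pow_right (by omega) (by have := Finset.mem_range.1 hi; omega)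
  have hpos : 0 < p ^ (g - 1) := Nat.pow_pos (by omega)
  have hcoef : P.coeff (p ^ (g - 1) + p ^ (g - 1)) = 1 := by
    simp only [P, coeff_sub, finsetSum_coeff, coeff_add, coeff_X_pow, coeff_C_mul]
    rw [if_neg (by omega), Finset.sum_eq_single (g - 1)]
    · rw [if_pos rfl, if_neg (by omega)]; simp
    · intro i hi hne
      rw [if_neg, if_neg, add_zero]
      · omega
      · intro h
        have := Nat.pow_right_injective hp1 (show p ^ (g - 1) = p ^ i by omega)
        omega
    · intro h; exact absurd (Finset.mem_range.2 (by omega)) h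
  have hP : P ≠ 0 := by
    intro h; rw [h] at hcoef; simp at hcoef
  have hdeg : P.natDegree ≤ 2 * p ^ (g - 1) := by
    refine (natDegree_sub_le_of_le (n := 2 * p ^ (g - 1)) (natDegree_sum_le_of_forall_le (n := 2 * p ^ (g - 1)) (Finset.range g)
      (fun i => (X ^ (p ^ (g - 1) + p ^ i) + X ^ (p ^ (g - 1) - p ^ i) : K[X])) fun i hi => ?_) ?_).trans
      (max_self _).le
    · have := hle i hi
      refine natDegree_add_le_of_degree_le ?_ ?_
      · rw [natDegree_X_pow]; omega
      · rw [natDegree_X_pow]; omega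
    · refine (natDegree_C_mul_X_pow_le _ _).trans ?_
      omega
  refine ⟨P.roots.toFinset, fun u hu ht => ?_,
    (Multiset.toFinset_card_le _).trans ((card_roots' _).trans hdeg)⟩
  rw [Multiset.mem_toFinset, mem_roots hP]
  have hu0 : u ≠ 0 := by rintro rfl; simp at hu
  have htr := FiniteField.algebraMap_trace_eq_sum_pow (ZMod p) K u
  rw [hK, ht, Nat.card_zmod, two_mul, Finset.sum_range_add, ← Finset.sum_add_distrib] at htr
  have hterm : ∀ i ∈ Finset.range g, u ^ (p ^ (g - 1) + p ^ i) + u ^ (p ^ (g - 1) - p ^ i)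
      = (u ^ p ^ i + u ^ p ^ (g + i)) * u ^ p ^ (g - 1) := by
    intro i hi
    have hinv : u ^ p ^ (g + i) * u ^ p ^ i = 1 := by
      rw [pow_add, pow_mul, ← mul_pow, ← pow_succ, hu, one_pow]
    have : u ^ p ^ (g - 1) = u ^ (p ^ (g - 1) - p ^ i) * u ^ p ^ i := by
      rw [← pow_add, Nat.sub_add_cancel (hle i hi)]
    rw [add_mul, pow_add, mul_comm]
    congr 1
    rw [this]
    linear_combination (-u ^ (p ^ (g - 1) - p ^ i)) * hinv
  simp only [P, IsRoot, eval_sub, eval_finsetSum, eval_add, eval_pow, eval_X, eval_mul, eval_C]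
  rw [Finset.sum_congr rfl hterm, ← Finset.sum_mul, htr, sub_self]

lemma good_elements (hg : 1 ≤ g) (hpg : 100 * g ≤ p) (hK : finrank (ZMod p) K = 2 * g) :
    ∃ Y : Finset K, (∀ u ∈ Y, u ^ (p ^ g + 1) = 1 ∧ IntermediateField.adjoin (ZMod p) {u} = ⊤ ∧
      ∀ t : ℤ, |t| ≤ 2 * g → Algebra.trace (ZMod p) K u ≠ (t : ZMod p)) ∧
      p ^ g + 1 ≤ 2 * Y.card := by
  classical
  obtain ⟨T, hT, hTc⟩ := card_norm_one hg hK
  obtain ⟨B, hB, hBc⟩ := card_subfield_le hK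
  choose D hD hDc using card_trace_le (p := p) (K := K) hg hK
  let E : Finset K := B ∪ (Finset.Icc (-(2 * g : ℤ)) (2 * g)).biUnion fun t => D (t : ZMod p)
  refine ⟨T \ E, ?_, ?_⟩
  · intro u hu
    rw [Finset.mem_sdiff] at hu
    have h1 := (hT u).1 hu.1
    refine ⟨h1, ?_, ?_⟩
    · by_contra h
      exact hu.2 (Finset.mem_union_left _ (hB u h1 h))
    · intro t ht h
      refine hu.2 (Finset.mem_union_right _ (Finset.mem_biUnion.2 ⟨t, ?_, hD _ u h1 h⟩))
      rw [Finset.mem_Icc]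
      exact abs_le.1 ht
  · have hE : E.card ≤ (2 + g * p ^ (g - 1)) + (4 * g + 1) * (2 * p ^ (g - 1)) := by
      refine (Finset.card_union_le _ _).trans (Nat.add_le_add hBc ?_)
      refine (Finset.card_biUnion_le_card_mul _ _ _ fun t _ => hDc _).trans ?_
      apply Nat.mul_le_mul_right
      rw [Int.card_Icc]
      omega
    have h2 := Finset.le_card_sdiff E T
    rw [hTc] at h2
    have hpos : 0 < p ^ (g - 1) := Nat.pow_pos (by omega)
    have h3 : p ^ g = p ^ (g - 1) * p := by rw [← pow_succ]; congr 1; omega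
    have h4 : p ^ (g - 1) * (100 * g) ≤ p ^ g := by rw [h3]; exact Nat.mul_le_mul_left _ hpg
    have h5 : p ^ (g - 1) ≤ p ^ (g - 1) * g := Nat.le_mul_of_pos_right _ hg
    have h6 : 2 * E.card ≤ p ^ g + 1 := by nlinarith
    omega

end FieldCount

section GoodCount

open Module

lemma good_count (p g : ℕ) [Fact p.Prime] (hg : 1 ≤ g) (hpg : 100 * g ≤ p)
    (Good : Finset (Matrix.symplecticGroup (Fin g) (ZMod p)))
    (hGood : ∀ M : Matrix.symplecticGroup (Fin g) (ZMod p), Irreducible M.1.charpoly →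
      (∀ t : ℤ, |t| ≤ 2 * g → M.1.trace ≠ (t : ZMod p)) → M ∈ Good) :
    Nat.card (Matrix.symplecticGroup (Fin g) (ZMod p)) ≤ 4 * g * Good.card := by
  have hK : finrank (ZMod p) (GaloisField p (2 * g)) = 2 * g := GaloisField.finrank p (by omega)
  obtain ⟨σ, hσ, hσσ⟩ := exists_conj p g (GaloisField p (2 * g)) hK
  obtain ⟨c, b, hc, hb⟩ := exists_sympl_basis p g (by omega) hg (GaloisField p (2 * g)) hK σ hσ hσσ
  obtain ⟨Y, hY, hYc⟩ := good_elements (K := GaloisField p (2 * g)) hg hpg hK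
  have h := conj_count hK σ hσ c hc b hb Y (fun u hu => ⟨(hY u hu).1, (hY u hu).2.1⟩) Good
    (by
      intro M u hu h
      apply hGood
      · rw [h, charpoly_leftMul_eq b u (hY u hu).2.1]
        exact minpoly.irreducible (IsIntegral.of_finite _ u)
      · have : Nonempty (Fin g ⊕ Fin g) := ⟨Sum.inl ⟨0, hg⟩⟩
        have htr : M.1.trace = Algebra.trace (ZMod p) _ u := by
          rw [Algebra.trace_eq_matrix_trace b, Matrix.trace_eq_neg_charpoly_coeff,
            Matrix.trace_eq_neg_charpoly_coeff, h]
        rw [htr]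
        exact (hY u hu).2.2)
  have h1 : Nat.card (Matrix.symplecticGroup (Fin g) (ZMod p)) * (p ^ g + 1) ≤
      4 * g * Good.card * (p ^ g + 1) := by
    calc _ ≤ Nat.card (Matrix.symplecticGroup (Fin g) (ZMod p)) * (2 * Y.card) :=
          Nat.mul_le_mul_left _ hYc
      _ = 2 * (Nat.card (Matrix.symplecticGroup (Fin g) (ZMod p)) * Y.card) := by ring
      _ ≤ 2 * (((p ^ g + 1) * (2 * g)) * Good.card) := Nat.mul_le_mul_left _ h
      _ = _ := by ring
  exact Nat.le_of_mul_le_mul_right h1 (Nat.succ_pos _)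

end GoodCount


section Transfer

open Polynomial

lemma cyclotomic_trace_bound (d m : ℕ) (hd : 1 ≤ d) (h : (cyclotomic m ℚ).natDegree = d) :
    |(cyclotomic m ℚ).coeff (d - 1)| ≤ d := by
  have hm : 0 < m := by
    rcases Nat.eq_zero_or_pos m with rfl | hm
    · simp at h; omega
    · exact hm
  have h1 := coeff_le_of_roots_le (p := cyclotomic m ℚ) (f := algebraMap ℚ ℂ) (B := 1) (d - 1)
    (cyclotomic.monic m ℚ) (IsAlgClosed.splits _) (by
      intro z hz
      rw [map_cyclotomic] at hz
      have hz' := (mem_roots (cyclotomic_ne_zero m ℂ)).1 hz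
      have : NeZero (m : ℂ) := ⟨by exact_mod_cast hm.ne'⟩
      have hprim := isRoot_cyclotomic_iff.1 hz'
      exact (hprim.norm'_eq_one hm.ne').le)
  rw [coeff_map, h, one_pow, one_mul] at h1
  have h2 : d.choose (d - 1) = d := by
    rw [Nat.choose_symm_of_eq_add (show d = (d - 1) + 1 by omega), Nat.choose_one_right]
  rw [h2] at h1
  have h3 : ‖algebraMap ℚ ℂ ((cyclotomic m ℚ).coeff (d - 1))‖
      = ((|(cyclotomic m ℚ).coeff (d - 1)| : ℚ) : ℝ) := by
    simp
  rw [h3] at h1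
  exact_mod_cast h1

lemma expand_coeff_zero (d k : ℕ) (hd : 1 ≤ d) (hk : 1 < k) (q h : ℚ[X]) (hq : q = h.comp (X ^ k))
    (hdeg : q.natDegree = d) : q.coeff (d - 1) = 0 := by
  have h1 : q = expand ℚ k h := by rw [hq, expand_eq_comp_X_pow]
  have h2 : d = h.natDegree * k := by rw [← hdeg, h1, natDegree_expand]
  rw [h1, coeff_expand (by omega), if_neg]
  intro h3
  have h4 : k ∣ d := h2 ▸ Dvd.intro_left _ rfl
  have h5 := (Nat.dvd_sub h4 h3)
  rw [show d - (d - 1) = 1 by omega] at h5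
  have := Nat.le_of_dvd one_pos h5
  omega

lemma transfer {p g : ℕ} [Fact p.Prime] (hg : 1 ≤ g)
    (M : Matrix (Fin g ⊕ Fin g) (Fin g ⊕ Fin g) ℤ)
    (hirr : Irreducible (M.map (Int.castRingHom (ZMod p))).charpoly)
    (htr : ∀ t : ℤ, |t| ≤ 2 * g → (M.map (Int.castRingHom (ZMod p))).trace ≠ (t : ZMod p)) :
    Irreducible (M.charpoly.map (algebraMap ℤ ℚ)) ∧
      (∀ m : ℕ, M.charpoly.map (algebraMap ℤ ℚ) ≠ cyclotomic m ℚ) ∧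
      ¬ ∃ k : ℕ, 1 < k ∧ ∃ h : ℚ[X], M.charpoly.map (algebraMap ℤ ℚ) = h.comp (X ^ k) := by
  have : Nonempty (Fin g ⊕ Fin g) := ⟨Sum.inl ⟨0, hg⟩⟩
  have htr' : ¬ |M.trace| ≤ 2 * g := by
    intro h
    apply htr _ h
    simp [Matrix.trace]
  have hdeg : (M.charpoly.map (algebraMap ℤ ℚ)).natDegree = 2 * g := by
    rw [(Matrix.charpoly_monic M).natDegree_map, Matrix.charpoly_natDegree_eq_dim]
    simp [two_mul]
  have hcoef : (M.charpoly.map (algebraMap ℤ ℚ)).coeff (2 * g - 1) = -(M.trace : ℚ) := by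
    rw [coeff_map, Matrix.trace_eq_neg_charpoly_coeff]
    simp [two_mul]
  refine ⟨?_, ?_, ?_⟩
  · rw [← (Matrix.charpoly_monic M).irreducible_iff_irreducible_map_fraction_map]
    rw [Matrix.charpoly_map] at hirr
    exact (Matrix.charpoly_monic M).irreducible_of_irreducible_map _ _ hirr
  · intro m hm
    have h := cyclotomic_trace_bound (2 * g) m (by omega) (by rw [← hm, hdeg])
    rw [← hm, hcoef, abs_neg] at h
    exact htr' (by exact_mod_cast h)
  · rintro ⟨k, hk, h, hq⟩
    have h0 := expand_coeff_zero (2 * g) k (by omega) hk _ h hq hdeg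
    rw [hcoef, neg_eq_zero] at h0
    have h1 : M.trace = 0 := by exact_mod_cast h0
    apply htr'
    rw [h1]; simp

end Transfer


section Final

open Filter

lemma exists_primes (k B : ℕ) : ∃ p : Fin k → ℕ, (∀ i, (p i).Prime) ∧ Function.Injective p ∧
    ∀ i, B ≤ p i := by
  have hinf : {n : ℕ | n.Prime ∧ B ≤ n}.Infinite := by
    rw [Set.infinite_iff_exists_gt]
    intro a
    obtain ⟨q, hq, hqp⟩ := Nat.exists_infinite_primes (a + B + 1)
    exact ⟨q, ⟨hqp, by omega⟩, by omega⟩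
  let e := hinf.natEmbedding
  exact ⟨fun i => (e i.1).1, fun i => (e i.1).2.1, fun i j h => Fin.ext (e.injective
    (Subtype.ext h)), fun i => (e i.1).2.2⟩

/-- The condition on a matrix modulo `p` which forces the Casson–Bleiler conditions. -/
def GoodMod (g p : ℕ) (M : Matrix.symplecticGroup (Fin g) (ZMod p)) : Prop :=
  Irreducible M.1.charpoly ∧ ∀ t : ℤ, |t| ≤ 2 * g → M.1.trace ≠ (t : ZMod p)

open scoped Classical in
lemma bad_density (g p : ℕ) [Fact p.Prime] (hg : 1 ≤ g) (hpg : 100 * g ≤ p)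
    [Fintype (Matrix.symplecticGroup (Fin g) (ZMod p))] :
    (∑ M : Matrix.symplecticGroup (Fin g) (ZMod p), if GoodMod g p M then (0 : ℝ) else 1) ≤
      (1 - 1 / (4 * g)) * Fintype.card (Matrix.symplecticGroup (Fin g) (ZMod p)) := by
  have h := good_count p g hg hpg (Finset.univ.filter (GoodMod g p))
    (fun M h1 h2 => Finset.mem_filter.2 ⟨Finset.mem_univ _, h1, h2⟩)
  have h1 : (∑ M : Matrix.symplecticGroup (Fin g) (ZMod p), if GoodMod g p M then (0 : ℝ) else 1)
      = Fintype.card (Matrix.symplecticGroup (Fin g) (ZMod p))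
        - (Finset.univ.filter (GoodMod g p)).card := by
    rw [eq_sub_iff_add_eq, Finset.card_filter, Nat.cast_sum, ← Finset.sum_add_distrib]
    rw [Finset.sum_congr rfl (g := fun _ => (1 : ℝ))]
    · simp
    · intro M _
      split_ifs <;> simp
  rw [h1]
  rw [Nat.card_eq_fintype_card] at h
  have h2 : (Fintype.card (Matrix.symplecticGroup (Fin g) (ZMod p)) : ℝ) ≤
    4 * g * (Finset.univ.filter (GoodMod g p)).card := by exact_mod_cast h
  have hg' : (0 : ℝ) < 4 * g := by positivity
  rw [sub_mul, one_mul, sub_le_sub_iff_left, one_div, ← div_eq_inv_mul, div_le_iff₀' hg']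
  exact h2

open scoped Classical in
lemma walk_bad (g : ℕ) (hg : 1 ≤ g)
    (S : Finset (Matrix.symplecticGroup (Fin g) ℤ))
    (hS : Subgroup.closure (S : Set (Matrix.symplecticGroup (Fin g) ℤ)) = ⊤)
    (hne : S.Nonempty) (k : ℕ) (p : Fin k → ℕ) (hp : ∀ i, (p i).Prime)
    (hinj : Function.Injective p) (hB : ∀ i, 100 * g ≤ p i) :
    ∃ c : ℝ, c ≤ (1 - 1 / (4 * g)) ^ k ∧
    Tendsto (fun N : ℕ => (∑ w : Fin N → {x // x ∈ S}, ∏ i : Fin k,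
      if GoodMod g (p i) (redSp (Fin g) (p i) (List.ofFn fun j => (w j).1).prod)
        then (0 : ℝ) else 1) / (S.card : ℝ) ^ N) atTop (nhds c) := by
  have hfact : ∀ i, Fact (p i).Prime := fun i => ⟨hp i⟩
  have hfin : ∀ i, Fintype (Matrix.symplecticGroup (Fin g) (ZMod (p i))) :=
    fun i => Fintype.ofFinite _
  have hnonempty : Nonempty {x // x ∈ S} := hne.to_subtype
  set Φ := MonoidHom.pi fun i => redSp (Fin g) (p i) with hΦ
  have hperf : commutator (∀ i, Matrix.symplecticGroup (Fin g) (ZMod (p i))) = ⊤ := by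
    apply commutator_pi_eq_top
    intro i
    have h100 := hB i
    apply commutator_sp_eq_top
    · have : ((2 : ℕ) : ZMod (p i)) ≠ 0 := by
        rw [Ne, ZMod.natCast_eq_zero_iff]
        exact fun h => by have := Nat.le_of_dvd (by norm_num) h; omega
      exact_mod_cast this
    · have : ((3 : ℕ) : ZMod (p i)) ≠ 0 := by
        rw [Ne, ZMod.natCast_eq_zero_iff]
        exact fun h => by have := Nat.le_of_dvd (by norm_num) h; omega
      exact_mod_cast this
  have hgen : Subgroup.closure (Set.range fun x : {x // x ∈ S} => Φ x.1) = ⊤ := by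
    have h1 : (Set.range fun x : {x // x ∈ S} => Φ x.1) = Set.image Φ (S : Set _) := by
      ext y
      simp
    rw [h1, ← MonoidHom.map_closure, hS, ← MonoidHom.range_eq_map, MonoidHom.range_eq_top]
    exact pi_redSp_surjective p hp hinj
  have hw := walk_equidistribution hperf (fun x : {x // x ∈ S} => Φ x.1) hgen
    (fun x => ∏ i : Fin k, if GoodMod g (p i) (x i) then (0 : ℝ) else 1)
  refine ⟨_, ?_, Tendsto.congr ?_ hw⟩
  rotate_left
  · intro N
    congr 1
    · refine Finset.sum_congr rfl fun w _ => Finset.prod_congr rfl fun i _ => ?_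
      have h2 : (List.ofFn fun j => Φ (w j).1).prod = Φ (List.ofFn fun j => (w j).1).prod := by
        rw [map_list_prod, List.map_ofFn]
        rfl
      rw [h2]
      rfl
    · rw [Fintype.card_coe]
  · have hprod : (∑ x : (∀ i, Matrix.symplecticGroup (Fin g) (ZMod (p i))),
        ∏ i : Fin k, if GoodMod g (p i) (x i) then (0 : ℝ) else 1) =
        ∏ i : Fin k, ∑ M : Matrix.symplecticGroup (Fin g) (ZMod (p i)),
          if GoodMod g (p i) M then (0 : ℝ) else 1 := by
      rw [Finset.prod_univ_sum, Fintype.piFinset_univ]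
    rw [hprod, Fintype.card_pi, Nat.cast_prod, ← Finset.prod_div_distrib]
    calc _ ≤ ∏ i : Fin k, (1 - 1 / (4 * (g : ℝ))) := by
          apply Finset.prod_le_prod
          · intro i _
            apply div_nonneg _ (Nat.cast_nonneg _)
            exact Finset.sum_nonneg fun M _ => by split_ifs <;> norm_num
          · intro i _
            rw [div_le_iff₀ (Nat.cast_pos.2 Fintype.card_pos)]
            exact bad_density g (p i) hg (hB i)
      _ = _ := by simp

end Final

open scoped Classical in
/-- the proportion of words of length `N` in a finite generating
set of `Sp(2g, ℤ)` whose product satisfies the Casson–Bleiler conditions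
(irreducible, non-cyclotomic characteristic polynomial, not of the form
`h(X^k)` with `k > 1`) tends to `1` as `N → ∞`. -/
theorem stmt14 (g : ℕ) (hg : 1 ≤ g)
    (S : Finset (Matrix.symplecticGroup (Fin g) ℤ))
    (hS : Subgroup.closure (S : Set (Matrix.symplecticGroup (Fin g) ℤ)) = ⊤) :
    Filter.Tendsto (fun N : ℕ =>
        ((Finset.univ.filter (fun w : Fin N → {x // x ∈ S} =>
            let q : Polynomial ℚ :=
              (Matrix.charpoly
                  (((List.ofFn fun i => (w i : Matrix.symplecticGroup (Fin g) ℤ)).prod :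
                      Matrix.symplecticGroup (Fin g) ℤ) :
                    Matrix (Fin g ⊕ Fin g) (Fin g ⊕ Fin g) ℤ)).map (algebraMap ℤ ℚ)
            Irreducible q ∧
              (∀ m : ℕ, q ≠ Polynomial.cyclotomic m ℚ) ∧
              ¬ ∃ k : ℕ, 1 < k ∧ ∃ h : Polynomial ℚ,
                  q = h.comp (Polynomial.X ^ k))).card : ℝ) /
        ((S.card : ℝ) ^ N))
      Filter.atTop (nhds 1) := by
  have hne : S.Nonempty := by
    rw [Finset.nonempty_iff_ne_empty]
    rintro rfl
    rw [Finset.coe_empty, Subgroup.closure_empty] at hS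
    have h1 : (⟨Matrix.J (Fin g) ℤ, SymplecticGroup.J_mem _ _⟩ : Matrix.symplecticGroup (Fin g) ℤ)
        ∈ (⊥ : Subgroup (Matrix.symplecticGroup (Fin g) ℤ)) := by rw [hS]; trivial
    rw [Subgroup.mem_bot] at h1
    have h2 := congrFun (congrFun (congrArg Subtype.val h1) (Sum.inl ⟨0, hg⟩)) (Sum.inl ⟨0, hg⟩)
    simp [Matrix.J] at h2
  have hcard : (0 : ℝ) < S.card := Nat.cast_pos.2 hne.card_pos
  rw [tendsto_order]
  have htot : ∀ N : ℕ, (Finset.univ : Finset (Fin N → {x // x ∈ S})).card = S.card ^ N := by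
    intro N; simp
  constructor
  · intro a ha
    have hg' : (1 : ℝ) ≤ g := by exact_mod_cast hg
    have hlt : (1 - 1 / (4 * (g : ℝ))) < 1 := by
      have : 0 < 1 / (4 * (g : ℝ)) := by positivity
      linarith
    have hge : 0 ≤ (1 - 1 / (4 * (g : ℝ))) := by
      rw [sub_nonneg, div_le_one (by positivity)]
      linarith
    obtain ⟨k, hk⟩ := exists_pow_lt_of_lt_one (show 0 < 1 - a by linarith) hlt
    obtain ⟨p, hp, hinj, hB⟩ := exists_primes k (100 * g)
    obtain ⟨c, hc, hlim⟩ := walk_bad g hg S hS hne k p hp hinj hB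
    have hev := (tendsto_order.1 hlim).2 (1 - a) (by linarith)
    filter_upwards [hev] with N hN
    have hpos : (0 : ℝ) < (S.card : ℝ) ^ N := pow_pos hcard N
    rw [div_lt_iff₀ hpos] at hN
    rw [lt_div_iff₀ hpos]
    have hkey : (S.card : ℝ) ^ N ≤ ((Finset.univ.filter (fun w : Fin N → {x // x ∈ S} =>
            let q : Polynomial ℚ :=
              (Matrix.charpoly
                  (((List.ofFn fun i => (w i : Matrix.symplecticGroup (Fin g) ℤ)).prod :
                      Matrix.symplecticGroup (Fin g) ℤ) :
                    Matrix (Fin g ⊕ Fin g) (Fin g ⊕ Fin g) ℤ)).map (algebraMap ℤ ℚ)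
            Irreducible q ∧
              (∀ m : ℕ, q ≠ Polynomial.cyclotomic m ℚ) ∧
              ¬ ∃ k : ℕ, 1 < k ∧ ∃ h : Polynomial ℚ,
                  q = h.comp (Polynomial.X ^ k))).card : ℝ) +
        ∑ w : Fin N → {x // x ∈ S}, ∏ i : Fin k,
          if GoodMod g (p i) (redSp (Fin g) (p i) (List.ofFn fun j => (w j).1).prod)
            then (0 : ℝ) else 1 := by
      rw [Finset.card_filter, Nat.cast_sum, ← Finset.sum_add_distrib]
      have h1 : (S.card : ℝ) ^ N = ∑ w : Fin N → {x // x ∈ S}, (1 : ℝ) := by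
        rw [Finset.sum_const, htot]; simp
      rw [h1]
      refine Finset.sum_le_sum fun w _ => ?_
      have hnn : 0 ≤ ∏ i : Fin k,
          if GoodMod g (p i) (redSp (Fin g) (p i) (List.ofFn fun j => (w j).1).prod)
            then (0 : ℝ) else 1 := Finset.prod_nonneg fun i _ => by split_ifs <;> norm_num
      by_cases hgood : ∃ i, GoodMod g (p i)
        (redSp (Fin g) (p i) (List.ofFn fun j => (w j).1).prod)
      · obtain ⟨i, hi⟩ := hgood
        have := Fact.mk (hp i)
        have ht := transfer hg (List.ofFn fun j => (w j).1).prod.1 hi.1 hi.2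
        rw [if_pos ht]
        simpa using hnn
      · push Not at hgood
        rw [Finset.prod_congr rfl (g := fun _ => (1 : ℝ)) fun i _ => if_neg (hgood i)]
        rw [Finset.prod_const_one]
        exact le_add_of_nonneg_left (Nat.cast_nonneg _)
    linarith
  · intro a ha
    refine Filter.Eventually.of_forall fun N => lt_of_le_of_lt ?_ ha
    rw [div_le_one (pow_pos hcard N), ← Nat.cast_pow, ← htot N, Nat.cast_le]
    exact Finset.card_filter_le _ _
end

section
/- Fix d ≥ 2, a natural number k with k < d, and an integer a, with a ≠ 0 in case k = 0. For N ≥ |a|, let P_N be the (finite, nonempty) set of monic polynomials f ∈ ℤ[X] with natDegree f = d, f.coeff k = a, and |f.coeff i| ≤ N for all i < d, and let G_N ⊆ P_N be the subset of polynomials with full symmetric Galois group over ℚ. Then |G_N| / |P_N| tends to 1 as N tends to infinity. -/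
open Polynomial NumberField

/-- Frobenius elements. -/
lemma frob_exists (E : Type) [Field E] [NumberField E] [IsGalois ℚ E] (p : ℕ) [hp : Fact p.Prime] :
    ∃ (κ : Type) (_ : Field κ) (_ : Finite κ) (_ : Algebra (ZMod p) κ) (π : 𝓞 E →+* κ)
      (σ : Gal(E/ℚ)), ∀ x : 𝓞 E, π (σ • x) = π x ^ p := by
  let P : Ideal ℤ := Ideal.span {(p:ℤ)}
  have hpZ : Prime (p : ℤ) := Nat.prime_iff_prime_int.mp hp.out
  have hPp : P.IsPrime := (Ideal.span_singleton_prime hpZ.ne_zero).2 hpZ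
  have hP0 : P ≠ ⊥ := by simp [P, hp.out.ne_zero]
  have hPm : P.IsMaximal := hPp.isMaximal hP0
  obtain ⟨Q, hQm, hQ⟩ := Ideal.exists_maximal_ideal_liesOver_of_isIntegral (S := 𝓞 E) P
  have hQ0 : Q ≠ ⊥ := Ideal.ne_bot_of_liesOver_of_ne_bot hP0 Q
  have : Finite (𝓞 E ⧸ Q) := Ideal.finiteQuotientOfFreeOfNeBot Q hQ0
  obtain ⟨σ, hσ⟩ := IsArithFrobAt.exists_of_isInvariant ℤ Gal(E/ℚ) Q
  have hu : Q.under ℤ = P := hQ.over.symm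
  have hcard : Nat.card (ℤ ⧸ Q.under ℤ) = p := by
    rw [hu, Nat.card_congr (Int.quotientSpanNatEquivZMod p).toEquiv, Nat.card_zmod]
  let _ : Field (𝓞 E ⧸ Q) := Ideal.Quotient.field Q
  have hchar : CharP (𝓞 E ⧸ Q) p := by
    have : ((p : ℕ) : 𝓞 E ⧸ Q) = 0 := by
      have h1 : (p : ℤ) ∈ Q.under ℤ := by rw [hu]; exact Ideal.mem_span_singleton_self _
      have h2 : algebraMap ℤ (𝓞 E) (p:ℤ) ∈ Q := h1
      have := Ideal.Quotient.eq_zero_iff_mem.2 h2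
      simpa using this
    exact (CharP.charP_iff_prime_eq_zero hp.out).2 this
  refine ⟨𝓞 E ⧸ Q, inferInstance, inferInstance, ZMod.algebra _ p, Ideal.Quotient.mk Q, σ, fun x => ?_⟩
  have := hσ.mk_apply x
  rw [hcard] at this
  exact this

lemma frob_roots (E : Type) [Field E] [NumberField E] [IsGalois ℚ E] (f : ℤ[X]) (hf : f.Monic)
    (hs : (f.map (algebraMap ℤ E)).Splits) (p : ℕ) [hp : Fact p.Prime]
    (hsep : (f.map (Int.castRingHom (ZMod p))).Separable) :
    (f.map (algebraMap ℤ E)).roots.Nodup ∧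
    ∃ (κ : Type) (_ : Field κ) (_ : Finite κ) (_ : Algebra (ZMod p) κ)
      (ρ : E → κ) (σ : Gal(E/ℚ)),
      Set.InjOn ρ {x | x ∈ (f.map (algebraMap ℤ E)).roots} ∧
      (∀ y, aeval y (f.map (Int.castRingHom (ZMod p))) = 0 ↔
        ∃ x ∈ (f.map (algebraMap ℤ E)).roots, ρ x = y) ∧
      ∀ x ∈ (f.map (algebraMap ℤ E)).roots, ρ (σ x) = ρ x ^ p := by
  classical
  obtain ⟨κ, i1, i2, i3, π, σ, hπ⟩ := frob_exists E p
  have hIntegral : ∀ x ∈ (f.map (algebraMap ℤ E)).roots, IsIntegral ℤ x := by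
    intro x hx
    refine ⟨f, hf, ?_⟩
    have := (mem_roots'.1 hx).2
    rwa [IsRoot.def, eval_map] at this
  let lft : E → 𝓞 E := fun x => if h : IsIntegral ℤ x then ⟨x, h⟩ else 0
  have hl : ∀ x, IsIntegral ℤ x → algebraMap (𝓞 E) E (lft x) = x := by
    intro x hx
    have : lft x = ⟨x, hx⟩ := dif_pos hx
    rw [this]; rfl
  set R := (f.map (algebraMap ℤ E)).roots with hR
  have hfE : f.map (algebraMap ℤ E) = (R.map fun x => X - C x).prod :=
    hs.eq_prod_roots_of_monic (hf.map _)
  have hfO : f.map (algebraMap ℤ (𝓞 E)) = ((R.map lft).map fun x => X - C x).prod := by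
    apply Polynomial.map_injective (algebraMap (𝓞 E) E) (RingOfIntegers.coe_injective)
    rw [Polynomial.map_map, ← IsScalarTower.algebraMap_eq, hfE, Polynomial.map_multiset_prod,
      Multiset.map_map, Multiset.map_map]
    congr 1
    apply Multiset.map_congr rfl
    intro x hx
    simp [hl x (hIntegral x hx)]
  have hfκ : (f.map (Int.castRingHom (ZMod p))).map (algebraMap (ZMod p) κ) =
      ((R.map (fun x => π (lft x))).map fun x => X - C x).prod := by
    have := congrArg (Polynomial.map π) hfO
    rw [Polynomial.map_map, Polynomial.map_multiset_prod, Multiset.map_map, Multiset.map_map] at this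
    rw [Polynomial.map_map, Multiset.map_map]
    rw [show (algebraMap (ZMod p) κ).comp (Int.castRingHom (ZMod p)) =
      π.comp (algebraMap ℤ (𝓞 E)) from Subsingleton.elim _ _, this]
    congr 1
    apply Multiset.map_congr rfl
    intro x _
    simp
  have hrt : ((f.map (Int.castRingHom (ZMod p))).map (algebraMap (ZMod p) κ)).roots =
      R.map (fun x => π (lft x)) := by
    rw [hfκ, roots_multiset_prod_X_sub_C]
  have hnd : (R.map (fun x => π (lft x))).Nodup := by
    rw [← hrt]
    exact nodup_roots hsep.map
  refine ⟨hnd.of_map, κ, i1, i2, i3, fun x => π (lft x), σ, ?_, ?_, ?_⟩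
  · intro x hx y hy h
    exact Multiset.inj_on_of_nodup_map hnd x hx y hy h
  · intro y
    have h0 : (f.map (Int.castRingHom (ZMod p))).map (algebraMap (ZMod p) κ) ≠ 0 :=
      ((hf.map _).map _).ne_zero
    rw [← Multiset.mem_map (f := fun x => π (lft x)), ← hrt, mem_roots h0, IsRoot.def, eval_map_algebraMap]
  · intro x hx
    change π (lft (σ x)) = π (lft x) ^ p
    rw [← hπ]
    congr 1
    apply RingOfIntegers.coe_injective
    have h1 : IsIntegral ℤ (σ x) := (hIntegral x hx).map (σ.toAlgHom.restrictScalars ℤ)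
    rw [hl _ h1]
    have : algebraMap (𝓞 E) E (σ • lft x) = σ • algebraMap (𝓞 E) E (lft x) := 
      algebraMap.coe_smul' σ (lft x) E
    rw [this, hl _ (hIntegral x hx)]
    rfl

def HasType {F : Type} [Field F] (m : ℕ) (f : F[X]) : Prop :=
  ∃ (g : F[X]) (t : Multiset F), g.Monic ∧ Irreducible g ∧ g.natDegree = m ∧
    f = g * (t.map fun s => X - C s).prod

lemma group_top {Ω : Type} [Finite Ω] [DecidableEq Ω] (H : Subgroup (Equiv.Perm Ω))
    (σ : Equiv.Perm Ω) (hσ : σ ∈ H) (w : Ω) (hw : σ w = w)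
    (htr : ∀ x y, x ≠ w → y ≠ w → ∃ n : ℕ, (σ ^ n) x = y)
    (τ : Equiv.Perm Ω) (hτ : τ ∈ H) (hτw : τ w ≠ w)
    (π : Equiv.Perm Ω) (hπ : π ∈ H) (hsw : π.IsSwap) : H = ⊤ := by
  have tr1 : ∀ x, ∃ g ∈ H, g x = w := by
    intro x
    by_cases hx : x = w
    · exact ⟨1, H.one_mem, by simpa using hx⟩
    · obtain ⟨n, hn⟩ := htr x (τ w) hx hτw
      refine ⟨τ⁻¹ * σ ^ n, H.mul_mem (H.inv_mem hτ) (H.pow_mem hσ n), ?_⟩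
      simp [hn]
  have hwn : ∀ n : ℕ, (σ ^ n) w = w := by
    intro n
    induction n with
    | zero => simp
    | succ n ih => rw [pow_succ, Equiv.Perm.mul_apply, hw, ih]
  obtain ⟨x, y, hxy, rfl⟩ := hsw
  rw [eq_top_iff, ← Equiv.Perm.closure_isSwap, Subgroup.closure_le]
  rintro _ ⟨a, b, hab, rfl⟩
  obtain ⟨u, hu, hux⟩ := tr1 x
  obtain ⟨v, hv, hva⟩ := tr1 a
  have h1 : u y ≠ w := fun h => hxy (u.injective (hux.trans h.symm))
  have h2 : v b ≠ w := fun h => hab (v.injective (hva.trans h.symm))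
  obtain ⟨n, hn⟩ := htr _ _ h1 h2
  set g := v⁻¹ * σ ^ n * u with hg
  have hgH : g ∈ H := H.mul_mem (H.mul_mem (H.inv_mem hv) (H.pow_mem hσ n)) hu
  have hgx : g x = a := by
    have : v⁻¹ w = a := by rw [← hva]; simp
    rw [hg, Equiv.Perm.mul_apply, Equiv.Perm.mul_apply, hux, hwn, this]
  have hgy : g y = b := by simp [hg, hn]
  have : Equiv.swap a b = g * Equiv.swap x y * g⁻¹ := by
    rw [← hgx, ← hgy, Equiv.swap_apply_apply]
  rw [this]
  exact H.mul_mem (H.mul_mem hgH hπ) (H.inv_mem hgH)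

lemma frob_conj_pow {p : ℕ} [Fact p.Prime] {κ : Type} [Field κ] [Finite κ] [Algebra (ZMod p) κ]
    (g : (ZMod p)[X]) (hg : g.Monic) (hi : Irreducible g) (x y : κ)
    (hx : aeval x g = 0) (hy : aeval y g = 0) : ∃ n : ℕ, x ^ p ^ n = y := by
  have h1 := minpoly.eq_of_irreducible_of_monic hi hx hg
  have h2 := minpoly.eq_of_irreducible_of_monic hi hy hg
  have : IsConjRoot (ZMod p) y x := isConjRoot_def.2 (h2.symm.trans h1)
  obtain ⟨φ, hφ⟩ := this.exists_algEquiv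
  obtain ⟨n, hn⟩ := (FiniteField.bijective_frobeniusAlgEquivOfAlgebraic_pow (ZMod p) κ).2 φ
  refine ⟨n, ?_⟩
  have h3 : φ x = y := hφ
  rw [← h3, ← hn]
  simp only [AlgEquiv.coe_pow]
  rw [FiniteField.coe_frobeniusAlgEquivOfAlgebraic_iterate, ZMod.card]

lemma perm_pow {p : ℕ} {κ Ω : Type} [Field κ] (ρ : Ω → κ) (σ : Equiv.Perm Ω)
    (h : ∀ x, ρ (σ x) = ρ x ^ p) (n : ℕ) (x : Ω) : ρ ((σ ^ n) x) = ρ x ^ p ^ n := by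
  induction n with
  | zero => simp
  | succ n ih => rw [pow_succ', Equiv.Perm.mul_apply, h, ih, ← pow_mul, pow_succ]

lemma aeval_type {p : ℕ} [Fact p.Prime] {κ : Type} [Field κ] [Algebra (ZMod p) κ]
    (g : (ZMod p)[X]) (t : Multiset (ZMod p)) (y : κ) :
    aeval y (g * (t.map fun s => X - C s).prod) = 0 ↔
      aeval y g = 0 ∨ ∃ s ∈ t, y = algebraMap (ZMod p) κ s := by
  rw [map_mul, mul_eq_zero, map_multiset_prod, Multiset.prod_eq_zero_iff, Multiset.map_map]
  apply or_congr Iff.rfl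
  simp [sub_eq_zero]

lemma deg_type {F : Type} [Field F] {f g : F[X]} {t : Multiset F} (hg : g.Monic)
    (hf : f = g * (t.map fun s => X - C s).prod) : f.natDegree = g.natDegree + t.card := by
  rw [hf, hg.natDegree_mul (monic_multiset_prod_of_monic _ _ fun s _ => monic_X_sub_C s)]
  congr 1
  simp

lemma type_trans {p d : ℕ} [Fact p.Prime] {κ Ω : Type} [Field κ] [Finite κ] [Algebra (ZMod p) κ]
    (f : (ZMod p)[X]) (hd : f.natDegree = d) (hd2 : 2 ≤ d) (hT : HasType (d-1) f)
    (ρ : Ω → κ) (hρ : Function.Injective ρ) (hr : ∀ y, aeval y f = 0 ↔ ∃ x, ρ x = y)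
    (σ : Equiv.Perm Ω) (h : ∀ x, ρ (σ x) = ρ x ^ p) :
    ∃ w, σ w = w ∧ ∀ x y, x ≠ w → y ≠ w → ∃ n : ℕ, (σ ^ n) x = y := by
  obtain ⟨g, t, hg, hi, hm, hf⟩ := hT
  have h1 := deg_type hg hf
  obtain ⟨s, rfl⟩ := Multiset.card_eq_one.1 (show t.card = 1 by omega)
  subst hf
  have hr' : ∀ y : κ, (∃ x, ρ x = y) ↔ aeval y g = 0 ∨ y = algebraMap (ZMod p) κ s := by
    intro y; rw [← hr, aeval_type]; simp
  obtain ⟨w, hw⟩ := (hr' (algebraMap (ZMod p) κ s)).2 (Or.inr rfl)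
  refine ⟨w, hρ ?_, ?_⟩
  · rw [h, hw, ← map_pow, ZMod.pow_card]
  · intro x y hx hy
    have key : ∀ x, x ≠ w → aeval (ρ x) g = 0 := by
      intro x hx
      refine ((hr' _).1 ⟨x, rfl⟩).resolve_right fun h => hx (hρ (h.trans hw.symm))
    obtain ⟨n, hn⟩ := frob_conj_pow g hg hi _ _ (key x hx) (key y hy)
    exact ⟨n, hρ (by rw [perm_pow ρ σ h, hn])⟩

lemma type_swap {p d : ℕ} [Fact p.Prime] {κ Ω : Type} [Field κ] [Finite κ] [Algebra (ZMod p) κ]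
    [Fintype Ω] [DecidableEq Ω]
    (f : (ZMod p)[X]) (hd : f.natDegree = d) (hΩ : Fintype.card Ω = d) (hT : HasType 2 f)
    (ρ : Ω → κ) (hρ : Function.Injective ρ) (hr : ∀ y, aeval y f = 0 ↔ ∃ x, ρ x = y)
    (σ : Equiv.Perm Ω) (h : ∀ x, ρ (σ x) = ρ x ^ p) : σ.IsSwap := by
  classical
  obtain ⟨g, t, hg, hi, hm, hf⟩ := hT
  have h1 := deg_type hg hf
  subst hf
  have hr' : ∀ x, aeval (ρ x) g = 0 ∨ ∃ s ∈ t, ρ x = algebraMap (ZMod p) κ s := by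
    intro x; rw [← aeval_type, hr]; exact ⟨x, rfl⟩
  have hsup : ∀ x, σ x ≠ x → aeval (ρ x) g = 0 := by
    intro x hx
    refine (hr' x).resolve_right ?_
    rintro ⟨s, _, hs⟩
    exact hx (hρ (by rw [h, hs, ← map_pow, ZMod.pow_card]))
  have hle : σ.support.card ≤ 2 := by
    have h2 : σ.support.image ρ ⊆ (g.map (algebraMap (ZMod p) κ)).roots.toFinset := by
      intro y hy
      obtain ⟨x, hx, rfl⟩ := Finset.mem_image.1 hy
      rw [Multiset.mem_toFinset, mem_roots (hg.map _).ne_zero, IsRoot.def, eval_map_algebraMap]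
      exact hsup x (Equiv.Perm.mem_support.1 hx)
    rw [← Finset.card_image_of_injective _ hρ]
    refine (Finset.card_le_card h2).trans ((Multiset.toFinset_card_le _).trans ?_)
    refine (card_roots' _).trans ?_
    rw [natDegree_map, hm]
  have hne : σ ≠ 1 := by
    rintro rfl
    -- some x is a root of g
    have : ∃ x, aeval (ρ x) g = 0 := by
      by_contra! hno
      have h3 : Finset.univ.image ρ ⊆ (t.map (algebraMap (ZMod p) κ)).toFinset := by
        intro y hy
        obtain ⟨x, -, rfl⟩ := Finset.mem_image.1 hy
        obtain ⟨s, hs, hs'⟩ := (hr' x).resolve_left (hno x)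
        rw [Multiset.mem_toFinset, Multiset.mem_map]
        exact ⟨s, hs, hs'.symm⟩
      have h4 := Finset.card_le_card h3
      rw [Finset.card_image_of_injective _ hρ, Finset.card_univ] at h4
      have h5 := Multiset.toFinset_card_le (t.map (algebraMap (ZMod p) κ))
      rw [Multiset.card_map] at h5
      omega
    obtain ⟨x, hx⟩ := this
    have hxp : ρ x ^ p = ρ x := by rw [← h]; rfl
    have h6 : ρ x ∈ (⊥ : IntermediateField (ZMod p) κ) := by
      rw [IsGalois.mem_bot_iff_fixed]
      intro φ
      obtain ⟨n, rfl⟩ := (FiniteField.bijective_frobeniusAlgEquivOfAlgebraic_pow (ZMod p) κ).2 φ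
      simp only [AlgEquiv.coe_pow]
      apply Function.iterate_fixed
      rw [FiniteField.coe_frobeniusAlgEquivOfAlgebraic, ZMod.card]
      exact hxp
    obtain ⟨s, hs⟩ := IntermediateField.mem_bot.1 h6
    rw [← hs, aeval_algebraMap_eq_zero_iff] at hx
    have h7 := Polynomial.degree_eq_one_of_irreducible_of_root hi (x := s) (by simpa using hx)
    have : g.natDegree = 1 := natDegree_eq_of_degree_eq_some h7
    omega
  rw [← Equiv.Perm.card_support_eq_two]
  have h8 := Equiv.Perm.two_le_card_support_of_ne_one hne
  omega

lemma frob_perm (f : ℤ[X]) (hf : f.Monic) (q : ℚ[X]) (hq : q = f.map (algebraMap ℤ ℚ))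
    (E : Type) [Field E] [ialg : Algebra ℚ E] [FiniteDimensional ℚ E] [Normal ℚ E]
    [Fact ((q.map (algebraMap ℚ E)).Splits)] (p : ℕ) [hp : Fact p.Prime]
    (hsep : (f.map (Int.castRingHom (ZMod p))).Separable) :
    Set.ncard (q.rootSet E) = f.natDegree ∧
    ∃ (κ : Type) (_ : Field κ) (_ : Finite κ) (_ : Algebra (ZMod p) κ)
      (ρ : q.rootSet E → κ) (σ : q.Gal),
      Function.Injective ρ ∧
      (∀ y, aeval y (f.map (Int.castRingHom (ZMod p))) = 0 ↔ ∃ x, ρ x = y) ∧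
      ∀ x, ρ (Gal.galActionHom q E σ x) = ρ x ^ p := by
  classical
  have hchar : CharZero E := algebraRat.charZero E
  have hal : ialg = DivisionRing.toRatAlgebra := Subsingleton.elim _ _
  subst hal
  have : NumberField E :=
    { to_charZero := inferInstance
      to_finiteDimensional := inferInstance }
  have hsp : (q.map (algebraMap ℚ E)).Splits := Fact.out
  have hmm : q.map (algebraMap ℚ E) = f.map (algebraMap ℤ E) := by
    subst hq
    rw [Polynomial.map_map]
    congr 1
    exact Subsingleton.elim _ _
  have hgal : IsGalois ℚ E := ⟨⟩
  rw [hmm] at hsp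
  obtain ⟨hnd, κ, i1, i2, i3, ρ, σ, h1, h2, h3⟩ := frob_roots E f hf hsp p hsep
  have hmem : ∀ x, x ∈ q.rootSet E ↔ x ∈ (f.map (algebraMap ℤ E)).roots := by
    intro x
    rw [rootSet_def, Finset.mem_coe, Multiset.mem_toFinset, aroots_def, hmm]
  refine ⟨?_, κ, i1, i2, i3, fun x => ρ x, Gal.restrict q E σ, ?_, ?_, ?_⟩
  · rw [rootSet_def, Set.ncard_coe_finset, aroots_def, hmm]
    rw [Multiset.toFinset_card_of_nodup hnd, ← hsp.natDegree_eq_card_roots, hf.natDegree_map]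
  · intro x y hxy
    exact Subtype.ext (h1 ((hmem _).1 x.2) ((hmem _).1 y.2) hxy)
  · intro y
    rw [h2]
    constructor
    · rintro ⟨x, hx, rfl⟩; exact ⟨⟨x, (hmem x).2 hx⟩, rfl⟩
    · rintro ⟨x, rfl⟩; exact ⟨x, (hmem _).1 x.2, rfl⟩
  · intro x
    change ρ _ = _
    rw [Gal.galActionHom_restrict]
    exact h3 x ((hmem _).1 x.2)

theorem full_gal (f : ℤ[X]) (hf : f.Monic) (d : ℕ) (hd : f.natDegree = d) (hd2 : 2 ≤ d)
    (q : ℚ[X]) (hq : q = f.map (algebraMap ℤ ℚ))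
    (E : Type) [Field E] [ialg : Algebra ℚ E] [FiniteDimensional ℚ E] [Normal ℚ E]
    [Fact ((q.map (algebraMap ℚ E)).Splits)]
    (h1 : ∃ p : ℕ, p.Prime ∧ ∀ x, ¬ (f.map (Int.castRingHom (ZMod p))).IsRoot x)
    (h2 : ∃ (p : ℕ) (_ : Fact p.Prime), HasType (d-1) (f.map (Int.castRingHom (ZMod p))) ∧
      (f.map (Int.castRingHom (ZMod p))).Separable)
    (h3 : d ≠ 2 → ∃ (p : ℕ) (_ : Fact p.Prime), HasType 2 (f.map (Int.castRingHom (ZMod p))) ∧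
      (f.map (Int.castRingHom (ZMod p))).Separable) :
    Set.ncard (q.rootSet E) = d ∧
      Function.Bijective (Gal.galActionHom q E) := by
  classical
  obtain ⟨p, hp, hT, hS⟩ := h2
  obtain ⟨hc, κ, i1, i2, i3, ρ, σ, a1, a2, a3⟩ := frob_perm f hf q hq E p hS
  have hdm : ∀ (p : ℕ) [Fact p.Prime], (f.map (Int.castRingHom (ZMod p))).natDegree = d := by
    intro p _; rw [hf.natDegree_map, hd]
  rw [hd] at hc
  refine ⟨hc, Gal.galActionHom_injective _ _, ?_⟩
  rw [← MonoidHom.range_eq_top]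
  have hcard : Fintype.card (q.rootSet E) = d := by
    rw [← hc, ← Nat.card_coe_set_eq, Nat.card_eq_fintype_card]
  obtain ⟨w, hw, htr⟩ := type_trans _ (hdm p) hd2 hT ρ a1 a2 _ a3
  have hτ : ∃ τ : q.Gal, Gal.galActionHom q E τ w ≠ w := by
    by_contra! hno
    have hfix : (w : E) ∈ (⊥ : IntermediateField ℚ E) := by
      have hgal : IsGalois ℚ E := ⟨⟩
      rw [IsGalois.mem_bot_iff_fixed]
      intro φ
      have := hno (Gal.restrict q E φ)
      rw [← Gal.galActionHom_restrict, this]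
    obtain ⟨r, hr⟩ := IntermediateField.mem_bot.1 hfix
    have hw2 : aeval (w : E) q = 0 := (mem_rootSet.1 w.2).2
    rw [← hr, aeval_algebraMap_eq_zero_iff] at hw2
    have hw3 : aeval r f = 0 := by
      rw [hq, aeval_map_algebraMap] at hw2
      exact hw2
    obtain ⟨z, hz⟩ := isInteger_of_is_root_of_monic hf hw3
    rw [← hz, aeval_algebraMap_eq_zero_iff] at hw3
    obtain ⟨p', hp', hno'⟩ := h1
    apply hno' ((z : ℤ) : ZMod p')
    have hz0 : f.eval z = 0 := by simpa using hw3
    rw [IsRoot.def, eval_intCast_map, Int.cast_id, hz0]; simp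
  obtain ⟨τ, hτ⟩ := hτ
  have hsw : ∃ π : q.Gal, (Gal.galActionHom q E π).IsSwap := by
    by_cases hd' : d = 2
    · refine ⟨τ, ?_⟩
      rw [← Equiv.Perm.card_support_eq_two]
      have h8 := Equiv.Perm.two_le_card_support_of_ne_one
        (f := Gal.galActionHom q E τ) (fun h => hτ (by rw [h]; rfl))
      have h9 := (Gal.galActionHom q E τ).support.card_le_univ
      omega
    · obtain ⟨p', hp', hT', hS'⟩ := h3 hd'
      obtain ⟨-, κ, i1, i2, i3, ρ, π, a1, a2, a3⟩ := frob_perm f hf q hq E p' hS'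
      exact ⟨π, type_swap _ (hdm p') hcard hT' ρ a1 a2 _ a3⟩
  obtain ⟨π, hπ⟩ := hsw
  exact group_top _ _ ⟨σ, rfl⟩ w hw htr _ ⟨τ, rfl⟩ hτ _ ⟨π, rfl⟩ hπ

section counting
open scoped Classical

/-- The monic polynomial with prescribed lower coefficients. -/
noncomputable def monPoly {R : Type} [CommRing R] {d : ℕ} (v : Fin d → R) : R[X] := X ^ d + ofFn d v

lemma monPoly_monic {R : Type} [CommRing R] {d : ℕ} (v : Fin d → R) : (monPoly v).Monic :=
  monic_X_pow_add (ofFn_degree_lt v)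

lemma monPoly_natDegree {R : Type} [CommRing R] [Nontrivial R] {d : ℕ} (v : Fin d → R) :
    (monPoly v).natDegree = d := by
  unfold monPoly
  rw [natDegree_add_eq_left_of_degree_lt, natDegree_X_pow]
  rw [degree_X_pow]; exact ofFn_degree_lt v

lemma monPoly_coeff {R : Type} [CommRing R] {d : ℕ} (v : Fin d → R) (i : ℕ) (hi : i < d) :
    (monPoly v).coeff i = v ⟨i, hi⟩ := by
  unfold monPoly
  rw [coeff_add, coeff_X_pow, if_neg (by omega), zero_add, ofFn_coeff_eq_val_of_lt v hi]

lemma monic_ext {R : Type} [CommRing R] {d : ℕ} {f g : R[X]} (hf : f.Monic) (hg : g.Monic)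
    (hfd : f.natDegree = d) (hgd : g.natDegree = d) (h : ∀ i < d, f.coeff i = g.coeff i) :
    f = g := by
  ext i
  rcases lt_trichotomy i d with hi | hi | hi
  · exact h i hi
  · subst hi
    have h1 := hf.coeff_natDegree
    have h2 := hg.coeff_natDegree
    rw [hfd] at h1
    rw [hgd] at h2
    rw [h1, h2]
  · rw [coeff_eq_zero_of_natDegree_lt (by omega), coeff_eq_zero_of_natDegree_lt (by omega)]

variable {F : Type} [Field F] [Fintype F]

variable (F) in
noncomputable def mon (d : ℕ) : Finset F[X] := Finset.univ.image (monPoly (R := F) (d := d))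

lemma mem_mon {d : ℕ} {f : F[X]} : f ∈ mon F d ↔ f.Monic ∧ f.natDegree = d := by
  unfold mon
  rw [Finset.mem_image]
  constructor
  · rintro ⟨v, -, rfl⟩
    exact ⟨monPoly_monic v, monPoly_natDegree v⟩
  · rintro ⟨h1, h2⟩
    refine ⟨fun i => f.coeff i, Finset.mem_univ _, ?_⟩
    apply monic_ext (monPoly_monic _) h1 (monPoly_natDegree _) h2
    intro i hi
    rw [monPoly_coeff _ i hi]

lemma card_le_pow {d : ℕ} (S : Finset F[X]) (J : Finset ℕ) (hJ : J ⊆ Finset.range d)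
    (h : ∀ f ∈ S, ∀ g ∈ S, (∀ i < d, i ∉ J → f.coeff i = g.coeff i) → f = g) :
    S.card ≤ Fintype.card F ^ (d - J.card) := by
  have h1 : S.card ≤ (Finset.univ : Finset ({i // i ∈ Finset.range d \ J} → F)).card := by
    apply Finset.card_le_card_of_injOn (fun f (i : {i // i ∈ Finset.range d \ J}) => f.coeff i.1) (fun _ _ => Finset.mem_univ _)
    intro f hf g hg hfg
    apply h f hf g hg
    intro i hi hiJ
    exact congrFun hfg ⟨i, by simp [hi, hiJ]⟩
  refine h1.trans_eq ?_
  rw [Finset.card_univ, Fintype.card_fun, Fintype.card_coe, Finset.card_sdiff_of_subset hJ, Finset.card_range]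

lemma card_mon (d : ℕ) : (mon F d).card ≤ Fintype.card F ^ d := by
  refine (card_le_pow (d := d) _ ∅ (by simp) ?_)
  intro f hf g hg h
  rw [mem_mon] at hf hg
  exact monic_ext hf.1 hg.1 hf.2 hg.2 fun i hi => h i hi (by simp)

lemma card_fix_le {d k : ℕ} (hk : k < d) (a : F) :
    ((mon F d).filter fun f => f.coeff k = a).card ≤ Fintype.card F ^ (d - 1) := by
  refine (card_le_pow (d := d) _ {k} (by simpa using hk) ?_)
  intro f hf g hg h
  rw [Finset.mem_filter, mem_mon] at hf hg
  refine monic_ext hf.1.1 hg.1.1 hf.1.2 hg.1.2 fun i hi => ?_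
  by_cases hik : i = k
  · subst hik; rw [hf.2, hg.2]
  · exact h i hi (by simpa using hik)

lemma card_fix_ge {d k : ℕ} (hk : k < d) (a : F) :
    Fintype.card F ^ (d - 1) ≤ ((mon F d).filter fun f => f.coeff k = a).card := by
  have h1 : (Finset.univ : Finset ({i // i ∈ Finset.range d \ {k}} → F)).card ≤
      ((mon F d).filter fun f => f.coeff k = a).card := by
    apply Finset.card_le_card_of_injOn (fun v => monPoly (d := d) fun i =>
      if h : i.1 ∈ Finset.range d \ {k} then v ⟨i, h⟩ else a)
    · intro v _
      simp only [Finset.coe_filter, Set.mem_ofPred_eq]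
      rw [mem_mon]
      refine ⟨⟨monPoly_monic _, monPoly_natDegree _⟩, ?_⟩
      rw [monPoly_coeff _ k hk]
      simp
    · intro v _ w _ h
      funext i
      have hi := i.2
      have hid : i.1 < d := by
        rw [Finset.mem_sdiff, Finset.mem_range] at hi; exact hi.1
      have := congrArg (fun f => f.coeff i.1) h
      simp only [monPoly_coeff _ i.1 hid] at this
      simpa [hi] using this
  rw [Finset.card_univ, Fintype.card_fun, Fintype.card_coe, Finset.card_sdiff_of_subset (by simpa using hk),
    Finset.card_range, Finset.card_singleton] at h1
  exact h1

/-- fibers of multiplication by a linear factor -/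
lemma card_pairs {e : ℕ} (Z : Finset (F[X] × F)) (hZ : ∀ z ∈ Z, z.1 ∈ mon F e) :
    Z.card ≤ (e + 1) * (Z.image fun z => (X - C z.2) * z.1).card := by
  apply Finset.card_le_mul_card_image
  intro f hf
  obtain ⟨z, hz, hzf⟩ := Finset.mem_image.1 hf
  have hz1 := mem_mon.1 (hZ z hz)
  have hfm : f.Monic := by rw [← hzf]; exact (monic_X_sub_C _).mul hz1.1
  have hfd : f.natDegree = e + 1 := by
    rw [← hzf, (monic_X_sub_C _).natDegree_mul hz1.1, natDegree_X_sub_C, hz1.2, add_comm]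
  rw [← hfd]
  refine le_trans ?_ (card_roots' f)
  refine le_trans ?_ (Multiset.toFinset_card_le _)
  apply Finset.card_le_card_of_injOn Prod.snd
  · intro y hy
    have hy := (Finset.mem_filter.1 (Finset.mem_coe.1 hy)).2
    rw [Finset.mem_coe, Multiset.mem_toFinset, mem_roots hfm.ne_zero, ← hy]
    simp
  · intro y hy y' hy' h
    have hy := (Finset.mem_filter.1 (Finset.mem_coe.1 hy)).2
    have hy' := (Finset.mem_filter.1 (Finset.mem_coe.1 hy')).2
    refine Prod.ext ?_ h
    rw [← hy', h] at hy
    exact mul_left_cancel₀ (X_sub_C_ne_zero _) hy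

noncomputable def tset (F : Type) [Field F] [Fintype F] (m e : ℕ) : Finset F[X] :=
  (mon F e).filter (HasType m)

lemma HasType.mul {m : ℕ} {f : F[X]} (h : HasType m f) (s : F) : HasType m ((X - C s) * f) := by
  obtain ⟨g, t, h1, h2, h3, h4⟩ := h
  refine ⟨g, s ::ₘ t, h1, h2, h3, ?_⟩
  rw [h4, Multiset.map_cons, Multiset.prod_cons]; ring

lemma mem_tset_mul {m e : ℕ} {f : F[X]} (h : f ∈ tset F m e) (s : F) :
    (X - C s) * f ∈ tset F m (e + 1) := by
  unfold tset at h ⊢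
  rw [Finset.mem_filter, mem_mon] at h ⊢
  refine ⟨⟨(monic_X_sub_C _).mul h.1.1, ?_⟩, h.2.mul s⟩
  rw [(monic_X_sub_C _).natDegree_mul h.1.1, natDegree_X_sub_C, h.1.2, add_comm]

lemma tset_step (m e : ℕ) :
    (tset F m e).card * Fintype.card F ≤ (e + 1) * (tset F m (e + 1)).card := by
  have h := card_pairs (e := e) (tset F m e ×ˢ (Finset.univ : Finset F)) (by
    intro z hz
    exact (Finset.mem_filter.1 (Finset.mem_product.1 hz).1).1)
  rw [Finset.card_product, Finset.card_univ] at h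
  refine h.trans (Nat.mul_le_mul_left _ (Finset.card_le_card ?_))
  intro f hf
  obtain ⟨z, hz, rfl⟩ := Finset.mem_image.1 hf
  exact mem_tset_mul (Finset.mem_product.1 hz).1 _

lemma coeff_lin (h : F[X]) (k : ℕ) (s : F) :
    ((X - C s) * h).coeff k = (X * h).coeff k - s * h.coeff k := by
  rw [sub_mul, coeff_sub, coeff_C_mul]

lemma tset_fix {d k : ℕ} (m : ℕ) (hd : 2 ≤ d) (hk : k < d) (a : F) :
    (tset F m (d-1)).card ≤ d * ((tset F m d).filter fun f => f.coeff k = a).card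
      + Fintype.card F ^ (d - 2) := by
  obtain ⟨e, rfl⟩ : ∃ e, d = e + 1 := ⟨d - 1, by omega⟩
  simp only [Nat.add_sub_cancel]
  have hsplit := Finset.card_filter_add_card_filter_not (s := tset F m e) (fun h => h.coeff k = 0)
  have hbad : ((tset F m e).filter fun h => h.coeff k = 0).card ≤ Fintype.card F ^ (e + 1 - 2) := by
    by_cases hke : k < e
    · refine le_trans (Finset.card_le_card ?_) (card_fix_le hke 0)
      exact Finset.filter_subset_filter _ (Finset.filter_subset _ _)
    · have : k = e := by omega
      subst this
      rw [Finset.filter_false_of_mem, Finset.card_empty]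
      · exact Nat.zero_le _
      · intro h hh h0
        have := mem_mon.1 (Finset.mem_filter.1 hh).1
        have h2 := this.1.coeff_natDegree
        rw [this.2, h0] at h2
        exact zero_ne_one h2
  have hgood : ((tset F m e).filter fun h => ¬ h.coeff k = 0).card ≤
      (e + 1) * ((tset F m (e+1)).filter fun f => f.coeff k = a).card := by
    let Z : Finset (F[X] × F) := ((tset F m e).filter fun h => ¬ h.coeff k = 0).image
      fun h => (h, ((X * h).coeff k - a) / h.coeff k)
    have hZc : Z.card = ((tset F m e).filter fun h => ¬ h.coeff k = 0).card :=
      Finset.card_image_of_injective _ fun x y h => congrArg Prod.fst h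
    rw [← hZc]
    have hZm : ∀ z ∈ Z, z.1 ∈ tset F m e ∧ ((X - C z.2) * z.1).coeff k = a := by
      intro z hz
      obtain ⟨h, hh, rfl⟩ := Finset.mem_image.1 hz
      rw [Finset.mem_filter] at hh
      refine ⟨hh.1, ?_⟩
      rw [coeff_lin, div_mul_cancel₀ _ hh.2]; ring
    refine (card_pairs (e := e) Z fun z hz => (Finset.mem_filter.1 (hZm z hz).1).1).trans
      (Nat.mul_le_mul_left _ (Finset.card_le_card ?_))
    intro f hf
    obtain ⟨z, hz, rfl⟩ := Finset.mem_image.1 hf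
    exact Finset.mem_filter.2 ⟨mem_tset_mul (hZm z hz).1 _, (hZm z hz).2⟩
  omega

lemma sep_of_type {m : ℕ} {f : F[X]} (h : HasType m f) (hs : ∀ s, ¬ (X - C s) ^ 2 ∣ f) :
    f.Separable := by
  rw [PerfectField.separable_iff_squarefree]
  obtain ⟨g, t, h1, h2, h3, h4⟩ := h
  have hf0 : f ≠ 0 := by
    rw [h4]
    exact (h1.mul (monic_multiset_prod_of_monic _ _ fun s _ => monic_X_sub_C s)).ne_zero
  rw [squarefree_iff_irreducible_sq_not_dvd_of_ne_zero hf0]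
  intro x hx hxx
  by_cases hd : x ∣ (t.map fun s => X - C s).prod
  · obtain ⟨y, hy, hxy⟩ := hx.prime.exists_mem_multiset_dvd hd
    obtain ⟨s, -, rfl⟩ := Multiset.mem_map.1 hy
    have hass := hx.associated_of_dvd (irreducible_X_sub_C s) hxy
    apply hs s
    rw [sq]
    exact ((hass.mul_mul hass).dvd_iff_dvd_left).1 hxx
  · have h5 : x ^ 2 ∣ g := by
      apply hx.prime.pow_dvd_of_dvd_mul_right 2 hd
      rw [sq, ← h4]; exact hxx
    exact hx.not_isUnit (h2.squarefree x (by rwa [sq] at h5))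


lemma quad_card (A B D : F) (h : A ≠ 0 ∨ B ≠ 0) :
    ((Finset.univ : Finset F).filter fun s => D + B * s + A * s ^ 2 = 0).card ≤ 2 := by
  let P : F[X] := C A * X ^ 2 + C B * X + C D
  have hP : P ≠ 0 := by
    intro hP
    have h2 : P.coeff 2 = A := by simp [P, coeff_X, coeff_C]
    have h1 : P.coeff 1 = B := by simp [P, coeff_X, coeff_C]
    rw [hP] at h1 h2
    simp at h1 h2
    rcases h with h | h
    · exact h h2.symm
    · exact h h1.symm
  have hdeg : P.natDegree ≤ 2 := natDegree_quadratic_le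
  refine le_trans ?_ ((Multiset.toFinset_card_le _).trans ((card_roots' P).trans hdeg))
  apply Finset.card_le_card
  intro s hs
  rw [Finset.mem_filter] at hs
  rw [Multiset.mem_toFinset, mem_roots hP, IsRoot.def]
  simp only [P, eval_add, eval_mul, eval_C, eval_pow, eval_X]
  linear_combination hs.2

lemma coeff_sq (u : F[X]) (k : ℕ) (s : F) :
    ((X - C s) ^ 2 * u).coeff k =
      (X ^ 2 * u).coeff k + (-2 * (X * u).coeff k) * s + u.coeff k * s ^ 2 := by
  have : (X - C s) ^ 2 * u = X ^ 2 * u - C (2 * s) * (X * u) + C (s ^ 2) * u := by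
    simp only [C_mul, C_pow, C_ofNat]
    ring
  rw [this, coeff_add, coeff_sub, coeff_C_mul, coeff_C_mul]
  ring

lemma dbl_card {d k : ℕ} (hd : 2 ≤ d) (hk : k < d) (a : F) (h2 : (2 : F) ≠ 0) :
    ((mon F d).filter fun f => f.coeff k = a ∧ ∃ s, (X - C s) ^ 2 ∣ f).card ≤
      3 * Fintype.card F ^ (d - 2) := by
  let B : Finset F[X] := (mon F (d-2)).filter fun u => u.coeff k = 0 ∧ (X * u).coeff k = 0
  let Z2 : Finset (F[X] × F) := (((mon F (d-2)) \ B) ×ˢ Finset.univ).filter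
    fun z => ((X - C z.2) ^ 2 * z.1).coeff k = a
  have hB : (B ×ˢ (Finset.univ : Finset F)).card ≤ Fintype.card F ^ (d - 2) := by
    rw [Finset.card_product, Finset.card_univ]
    by_cases hk2 : k < d - 2
    · have h1 : B.card ≤ Fintype.card F ^ (d - 2 - 1) := by
        refine (Finset.card_le_card ?_).trans (card_fix_le (F := F) hk2 0)
        intro u hu
        rw [Finset.mem_filter] at hu ⊢
        exact ⟨hu.1, hu.2.1⟩
      calc _ ≤ Fintype.card F ^ (d - 2 - 1) * Fintype.card F := Nat.mul_le_mul_right _ h1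
        _ = _ := by rw [← pow_succ]; congr 1; omega
    · have : B = ∅ := by
        apply Finset.filter_false_of_mem
        rintro u hu ⟨h3, h4⟩
        have hm := mem_mon.1 hu
        have h5 := hm.1.coeff_natDegree
        rw [hm.2] at h5
        by_cases hk3 : k = d - 2
        · rw [← hk3, h3] at h5; exact zero_ne_one h5
        · have : k = (d - 2) + 1 := by omega
          rw [this, coeff_X_mul, h5] at h4
          exact one_ne_zero h4
      rw [this]; simp
  have hZ2 : Z2.card ≤ 2 * Fintype.card F ^ (d - 2) := by
    refine le_trans ?_ (Nat.mul_le_mul_left 2 (card_mon (F := F) (d-2)))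
    apply Finset.card_le_mul_card_image_of_maps_to (f := Prod.fst)
    · intro z hz
      exact (Finset.mem_sdiff.1 (Finset.mem_product.1 (Finset.mem_filter.1 hz).1).1).1
    · intro u hu
      by_cases huB : u ∈ B
      · rw [Finset.filter_false_of_mem, Finset.card_empty]
        · omega
        · intro z hz hzu
          have := (Finset.mem_sdiff.1 (Finset.mem_product.1 (Finset.mem_filter.1 hz).1).1).2
          rw [hzu] at this
          exact this huB
      · have hAB : u.coeff k ≠ 0 ∨ (-2 * (X * u).coeff k) ≠ 0 := by
          by_contra! hcon
          apply huB
          refine Finset.mem_filter.2 ⟨hu, hcon.1, ?_⟩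
          have := hcon.2
          simpa [h2] using this
        refine le_trans ?_ (quad_card (u.coeff k) (-2 * (X * u).coeff k) ((X ^ 2 * u).coeff k - a) hAB)
        apply Finset.card_le_card_of_injOn Prod.snd
        · intro z hz
          rw [Finset.mem_coe, Finset.mem_filter] at hz ⊢
          refine ⟨Finset.mem_univ _, ?_⟩
          have h3 := (Finset.mem_filter.1 hz.1).2
          rw [hz.2, coeff_sq] at h3
          linear_combination h3
        · intro z hz z' hz' h
          rw [Finset.mem_coe, Finset.mem_filter] at hz hz'
          exact Prod.ext (hz.2.trans hz'.2.symm) h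
  have hsub : ((mon F d).filter fun f => f.coeff k = a ∧ ∃ s, (X - C s) ^ 2 ∣ f) ⊆
      ((B ×ˢ (Finset.univ : Finset F)) ∪ Z2).image fun z => (X - C z.2) ^ 2 * z.1 := by
    intro f hf
    rw [Finset.mem_filter, mem_mon] at hf
    obtain ⟨⟨hm, hdeg⟩, hfk, s, u, rfl⟩ := hf
    have hsm : ((X - C s) ^ 2).Monic := (monic_X_sub_C s).pow 2
    have hum : u.Monic := hsm.of_mul_monic_left hm
    have hud : u.natDegree = d - 2 := by
      rw [hsm.natDegree_mul hum, (monic_X_sub_C s).natDegree_pow, natDegree_X_sub_C] at hdeg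
      omega
    have humem : u ∈ mon F (d-2) := mem_mon.2 ⟨hum, hud⟩
    refine Finset.mem_image.2 ⟨(u, s), ?_, rfl⟩
    rw [Finset.mem_union]
    by_cases huB : u ∈ B
    · left; exact Finset.mem_product.2 ⟨huB, Finset.mem_univ _⟩
    · right
      exact Finset.mem_filter.2 ⟨Finset.mem_product.2 ⟨Finset.mem_sdiff.2 ⟨humem, huB⟩, Finset.mem_univ _⟩, hfk⟩
  have := (Finset.card_le_card hsub).trans (Finset.card_image_le.trans (Finset.card_union_le _ _))
  omega

lemma root_card {d k : ℕ} (hd : 2 ≤ d) (hk : k < d) (a : F) (ha : k = 0 → a ≠ 0) (r : F) :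
    (((mon F d).filter fun f => f.coeff k = a).filter fun f => f.IsRoot r).card ≤
      Fintype.card F ^ (d - 2) := by
  obtain ⟨j, hj, hjk, hj0⟩ : ∃ j, j < d ∧ j ≠ k ∧ (j = 0 ∨ k = 0) := by
    by_cases hk0 : k = 0
    · exact ⟨1, by omega, by omega, Or.inr hk0⟩
    · exact ⟨0, by omega, by omega, Or.inl rfl⟩
  have := card_le_pow (F := F) (d := d)
    (((mon F d).filter fun f => f.coeff k = a).filter fun f => f.IsRoot r) {k, j} (by
      intro i hi
      rw [Finset.mem_insert, Finset.mem_singleton] at hi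
      rw [Finset.mem_range]; omega) (by
    intro f hf g hg hfg
    rw [Finset.mem_filter, Finset.mem_filter, mem_mon] at hf hg
    obtain ⟨⟨⟨f1, f2⟩, f3⟩, f4⟩ := hf
    obtain ⟨⟨⟨g1, g2⟩, g3⟩, g4⟩ := hg
    have hsub : f - g = C (f.coeff j - g.coeff j) * X ^ j := by
      have : g + C (f.coeff j - g.coeff j) * X ^ j - f = 0 := by
        ext i
        rw [coeff_sub, coeff_add, coeff_C_mul_X_pow, coeff_zero]
        by_cases hij : i = j
        · subst hij; simp
        · rw [if_neg hij]
          rcases lt_trichotomy i d with hi | hi | hi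
          · by_cases hik : i = k
            · subst hik; rw [f3, g3]; ring
            · rw [hfg i hi (by simp [hij, hik])]; ring
          · have h1 := f1.coeff_natDegree
            have h2 := g1.coeff_natDegree
            rw [f2] at h1
            rw [g2] at h2
            rw [hi, h1, h2]; ring
          · rw [coeff_eq_zero_of_natDegree_lt (by omega), coeff_eq_zero_of_natDegree_lt (by omega)]
            ring
      linear_combination -this
    have hev := congrArg (eval r) hsub
    rw [eval_sub, f4.eq_zero, g4.eq_zero] at hev
    simp only [sub_zero, eval_mul, eval_C, eval_pow, eval_X] at hev
    have hr : r ^ j ≠ 0 := by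
      rcases hj0 with rfl | rfl
      · simp
      · apply pow_ne_zero
        rintro rfl
        apply ha rfl
        rw [← f3, coeff_zero_eq_eval_zero]
        exact f4
    have h0 : f.coeff j - g.coeff j = 0 := by
      rcases mul_eq_zero.1 hev.symm with h | h
      · exact h
      · exact absurd h hr
    rw [h0, C_0, zero_mul] at hsub
    exact sub_eq_zero.1 hsub)
  rwa [Finset.card_pair hjk.symm] at this

lemma noroot_card {d k : ℕ} (hd : 2 ≤ d) (hk : k < d) (a : F) (ha : k = 0 → a ≠ 0) :
    (((mon F d).filter fun f => f.coeff k = a).filter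
      fun f => 2 ≤ ((Finset.univ : Finset F).filter fun r => f.IsRoot r).card).card ≤
    (((mon F d).filter fun f => f.coeff k = a).filter fun f => ∀ r, ¬ f.IsRoot r).card := by
  set V := (mon F d).filter fun f => f.coeff k = a with hV
  have h1 : ∑ f ∈ V, ((Finset.univ : Finset F).filter fun r => f.IsRoot r).card ≤
      Fintype.card F ^ (d - 1) := by
    have := Finset.sum_card_bipartiteAbove_eq_sum_card_bipartiteBelow (s := V)
      (t := (Finset.univ : Finset F)) (fun f r => f.IsRoot r)
    unfold Finset.bipartiteAbove Finset.bipartiteBelow at this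
    rw [this]
    calc _ ≤ ∑ r : F, Fintype.card F ^ (d - 2) := Finset.sum_le_sum fun r _ => root_card hd hk a ha r
      _ = Fintype.card F ^ (d - 1) := by
        rw [Finset.sum_const, Finset.card_univ, smul_eq_mul, ← pow_succ']; congr 1; omega
  have h2 := card_fix_ge hk a
  rw [← hV] at h2
  rw [Finset.card_filter, Finset.card_filter]
  have h3 : ∑ f ∈ V, (1 + if 2 ≤ ((Finset.univ : Finset F).filter fun r => f.IsRoot r).card then 1 else 0) ≤
      ∑ f ∈ V, (((Finset.univ : Finset F).filter fun r => f.IsRoot r).card +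
        if ∀ r, ¬ f.IsRoot r then 1 else 0) := by
    apply Finset.sum_le_sum
    intro f _
    by_cases hn : ∀ r, ¬ f.IsRoot r
    · rw [if_pos hn, Finset.filter_false_of_mem (fun r _ => hn r)]
      simp
    · rw [if_neg hn]
      push Not at hn
      obtain ⟨r, hr⟩ := hn
      have : 0 < ((Finset.univ : Finset F).filter fun r => f.IsRoot r).card :=
        Finset.card_pos.2 ⟨r, by simpa using hr⟩
      split_ifs <;> omega
  rw [Finset.sum_add_distrib, Finset.sum_add_distrib, Finset.sum_const, smul_eq_mul, mul_one] at h3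
  omega

lemma irr_card_aux (m : ℕ) (K : Type) [Field K] [Fintype K] [Algebra F K]
    [FiniteDimensional F K]
    (hcard : Fintype.card K = Fintype.card F ^ m) (hfr : Module.finrank F K = m) :
    Fintype.card F ^ m ≤ m * ((tset F m m).card + m * Fintype.card F ^ (m - 1)) := by
  let T : Finset F[X] := tset F m m ∪ (Finset.range m).biUnion fun j => mon F j
  have hIntegral : ∀ x : K, IsIntegral F x := fun x => Algebra.IsIntegral.isIntegral x
  have h1 : (Finset.univ : Finset K).card ≤ m * T.card := by
    apply Finset.card_le_mul_card_image_of_maps_to (f := fun x : K => minpoly F x)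
    · intro x _
      have hle : (minpoly F x).natDegree ≤ m := hfr ▸ minpoly.natDegree_le x
      have hmon := minpoly.monic (hIntegral x)
      rcases hle.lt_or_eq with h | h
      · apply Finset.mem_union_right
        rw [Finset.mem_biUnion]
        exact ⟨_, Finset.mem_range.2 h, mem_mon.2 ⟨hmon, rfl⟩⟩
      · apply Finset.mem_union_left
        unfold tset
        rw [Finset.mem_filter, mem_mon]
        exact ⟨⟨hmon, h⟩, minpoly F x, 0, hmon, minpoly.irreducible (hIntegral x), h, by simp⟩
    · intro f hf
      by_cases hx : ∃ x : K, minpoly F x = f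
      · obtain ⟨x, rfl⟩ := hx
        have hle : (minpoly F x).natDegree ≤ m := hfr ▸ minpoly.natDegree_le x
        have hmon := minpoly.monic (hIntegral x)
        refine le_trans ?_ hle
        have h2 : (Finset.univ.filter fun y : K => minpoly F y = minpoly F x) ⊆
            ((minpoly F x).map (algebraMap F K)).roots.toFinset := by
          intro y hy
          rw [Multiset.mem_toFinset, mem_roots (hmon.map _).ne_zero, IsRoot.def, eval_map_algebraMap,
            ← (Finset.mem_filter.1 hy).2, minpoly.aeval]
        refine (Finset.card_le_card h2).trans ((Multiset.toFinset_card_le _).trans ((card_roots' _).trans ?_))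
        exact natDegree_map_le
      · rw [Finset.filter_eq_empty_iff.2]
        · simp
        · intro x _ h; exact hx ⟨x, h⟩
  rw [Finset.card_univ, hcard] at h1
  refine h1.trans (Nat.mul_le_mul_left _ ((Finset.card_union_le _ _).trans (Nat.add_le_add_left ?_ _)))
  refine (Finset.card_biUnion_le_card_mul _ _ (Fintype.card F ^ (m-1)) ?_).trans (by simp)
  intro j hj
  refine (card_mon j).trans ?_
  exact Nat.pow_le_pow_right Fintype.card_pos (by have := Finset.mem_range.1 hj; omega)

lemma irr_card (m : ℕ) (hm : 1 ≤ m) :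
    Fintype.card F ^ m ≤ m * ((tset F m m).card + m * Fintype.card F ^ (m - 1)) := by
  obtain ⟨p, hp⟩ := CharP.exists F
  have : Fact p.Prime := ⟨CharP.char_is_prime F p⟩
  have : NeZero m := ⟨by omega⟩
  have : Fintype (FiniteField.Extension F p m) := Fintype.ofFinite _
  refine irr_card_aux m (FiniteField.Extension F p m) ?_ (FiniteField.finrank_extension F p m)
  rw [← Nat.card_eq_fintype_card, ← Nat.card_eq_fintype_card]
  exact FiniteField.natCard_extension F p m

lemma tset_lower (m : ℕ) (hm : 1 ≤ m) (e : ℕ) (he : m ≤ e) : ∃ C : ℕ, 0 < C ∧ ∃ p0 : ℕ, ∀ (F : Type) [Field F] [Fintype F],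
    p0 ≤ Fintype.card F → Fintype.card F ^ e ≤ C * (tset F m e).card := by
  induction e, he using Nat.le_induction with
  | base =>
    refine ⟨2 * m, by omega, 2 * m * m, fun F _ _ hp => ?_⟩
    have h := irr_card (F := F) m hm
    have h2 : 2 * m * m * Fintype.card F ^ (m-1) ≤ Fintype.card F ^ m := by
      conv_rhs => rw [show m = (m - 1) + 1 by omega, pow_succ']
      exact Nat.mul_le_mul_right _ hp
    nlinarith
  | succ e he ih =>
    obtain ⟨C, hC, p0, h⟩ := ih
    refine ⟨C * (e + 1), by positivity, p0, fun F _ _ hp => ?_⟩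
    have h1 := h F hp
    have h2 := tset_step (F := F) m e
    calc Fintype.card F ^ (e+1) = Fintype.card F ^ e * Fintype.card F := pow_succ _ _
      _ ≤ C * (tset F m e).card * Fintype.card F := Nat.mul_le_mul_right _ h1
      _ = C * ((tset F m e).card * Fintype.card F) := by ring
      _ ≤ C * ((e+1) * (tset F m (e+1)).card) := Nat.mul_le_mul_left _ h2
      _ = _ := by ring

lemma type_lower {d k : ℕ} (hd : 2 ≤ d) (hk : k < d) (m : ℕ) (hm : 1 ≤ m) (hmd : m ≤ d - 1) :
    ∃ C : ℕ, 0 < C ∧ ∃ p0 : ℕ, ∀ (F : Type) [Field F] [Fintype F], p0 ≤ Fintype.card F → (2 : F) ≠ 0 → ∀ a : F,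
      Fintype.card F ^ (d - 1) ≤ C * (((mon F d).filter fun f => f.coeff k = a).filter
        fun f => HasType m f ∧ f.Separable).card := by
  obtain ⟨C, hC, p0, h⟩ := tset_lower m hm (d-1) hmd
  refine ⟨2 * C * d, by positivity, max p0 (2 * C * (1 + 3 * d)), fun F _ _ hp h20 a => ?_⟩
  have hp0 : p0 ≤ Fintype.card F := le_trans (le_max_left _ _) hp
  have hpC : 2 * C * (1 + 3 * d) ≤ Fintype.card F := le_trans (le_max_right _ _) hp
  have h1 := h F hp0
  have h2 := tset_fix (F := F) m hd hk a
  have h3 := dbl_card (F := F) hd hk a h20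
  have h4 : ((tset F m d).filter fun f => f.coeff k = a).card ≤
      (((mon F d).filter fun f => f.coeff k = a).filter
        fun f => HasType m f ∧ f.Separable).card + 3 * Fintype.card F ^ (d-2) := by
    refine le_trans (le_trans (Finset.card_le_card ?_) (Finset.card_union_le _ _)) (Nat.add_le_add_left h3 _)
    intro f hf
    unfold tset at hf
    simp only [Finset.mem_filter, Finset.mem_union] at hf ⊢
    by_cases hs : ∃ s, (X - Polynomial.C s) ^ 2 ∣ f
    · exact Or.inr ⟨hf.1.1, hf.2, hs⟩
    · exact Or.inl ⟨⟨hf.1.1, hf.2⟩, hf.1.2, sep_of_type hf.1.2 (not_exists.1 hs)⟩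
  set n := (((mon F d).filter fun f => f.coeff k = a).filter
        fun f => HasType m f ∧ f.Separable).card
  have h5 : 2 * C * (1 + 3 * d) * Fintype.card F ^ (d-2) ≤ Fintype.card F ^ (d-1) := by
    rw [show d - 1 = (d - 2) + 1 by omega, pow_succ']
    exact Nat.mul_le_mul_right _ hpC
  have h6 : Fintype.card F ^ (d-1) ≤ C * (d * (n + 3 * Fintype.card F ^ (d-2)) + Fintype.card F ^ (d-2)) :=
    h1.trans (Nat.mul_le_mul_left _ (h2.trans (Nat.add_le_add_right (Nat.mul_le_mul_left _ h4) _)))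
  nlinarith

lemma noroot_lower {d k : ℕ} (hd : 2 ≤ d) (hk : k < d) :
    ∃ C : ℕ, 0 < C ∧ ∃ p0 : ℕ, ∀ (F : Type) [Field F] [Fintype F], p0 ≤ Fintype.card F → (2 : F) ≠ 0 → ∀ a : F, (k = 0 → a ≠ 0) →
      Fintype.card F ^ (d - 1) ≤ C * (((mon F d).filter fun f => f.coeff k = a).filter
        fun f => ∀ r, ¬ f.IsRoot r).card := by
  obtain ⟨C, hC, p0, h⟩ := type_lower hd hk 1 le_rfl (by omega)
  refine ⟨C, hC, p0, fun F _ _ hp h20 a ha => (h F hp h20 a).trans (Nat.mul_le_mul_left _ ?_)⟩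
  refine le_trans (Finset.card_le_card ?_) (noroot_card hd hk a ha)
  intro f hf
  rw [Finset.mem_filter] at hf ⊢
  obtain ⟨hf1, ⟨g, t, hg1, hg2, hg3, rfl⟩, hs⟩ := hf
  refine ⟨hf1, ?_⟩
  set f := g * (t.map fun s => X - Polynomial.C s).prod with hf
  have hfm := mem_mon.1 (Finset.mem_filter.1 hf1).1
  have hsp : f.Splits := by
    rw [hf]
    refine (Splits.of_natDegree_le_one hg3.le).mul ?_
    apply Splits.multisetProd
    intro q hq
    obtain ⟨s, _, rfl⟩ := Multiset.mem_map.1 hq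
    exact Splits.X_sub_C s
  have hc : f.roots.card = d := hfm.2 ▸ hsp.natDegree_eq_card_roots.symm
  have hn : f.roots.Nodup := nodup_roots hs
  have : f.roots.toFinset ⊆ (Finset.univ : Finset F).filter fun r => f.IsRoot r := by
    intro r hr
    rw [Multiset.mem_toFinset] at hr
    simpa using isRoot_of_mem_roots hr
  have := Finset.card_le_card this
  rw [Multiset.toFinset_card_of_nodup hn, hc] at this
  omega

lemma int_cong_card (N M : ℕ) (hM : 0 < M) (T : Finset ℤ) (hT : ∀ x ∈ T, |x| ≤ (N : ℤ))
    (h : ∀ x ∈ T, ∀ y ∈ T, (M : ℤ) ∣ x - y) :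
    (T.card : ℝ) ≤ (2 * N + 1) / M + 1 := by
  rcases T.eq_empty_or_nonempty with rfl | ⟨v, hv⟩
  · simp; positivity
  have hsub : T ⊆ (Finset.Ioc (-(N:ℤ) - 1) N).filter fun x => x ≡ v [ZMOD M] := by
    intro x hx
    rw [Finset.mem_filter, Finset.mem_Ioc]
    have := abs_le.1 (hT x hx)
    refine ⟨⟨by linarith [this.1], this.2⟩, ?_⟩
    exact Int.modEq_iff_dvd.2 (h v hv x hx)
  have h1 := Finset.card_le_card hsub
  have h2 := Int.Ioc_filter_modEq_card (-(N:ℤ) - 1) N (r := (M:ℤ)) (by exact_mod_cast hM) v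
  have h3 : (T.card : ℤ) ≤ max (⌊(((N:ℤ) - v : ℚ)) / (M:ℤ)⌋ - ⌊(((-(N:ℤ) - 1 : ℤ) - v : ℚ)) / (M:ℤ)⌋) 0 := by
    rw [← h2]; exact_mod_cast h1
  have hMq : (0:ℚ) < M := by exact_mod_cast hM
  have h4 : (T.card : ℚ) ≤ (2 * N + 1) / M + 1 := by
    rcases le_max_iff.1 h3 with h3 | h3
    · have h5 : (T.card : ℚ) ≤ (⌊(((N:ℤ) - v : ℚ)) / (M:ℤ)⌋ : ℚ) - ⌊(((-(N:ℤ) - 1 : ℤ) - v : ℚ)) / (M:ℤ)⌋ := by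
        exact_mod_cast h3
      have h6 := Int.floor_le ((((N:ℤ) - v : ℚ)) / (M:ℤ))
      have h7 := Int.lt_floor_add_one ((((-(N:ℤ) - 1 : ℤ) - v : ℚ)) / (M:ℤ))
      have h8 : (((N:ℤ) - v : ℚ)) / (M:ℤ) - (((-(N:ℤ) - 1 : ℤ) - v : ℚ)) / (M:ℤ) = (2 * N + 1) / M := by
        push_cast
        field_simp
        ring
      linarith
    · have : (T.card : ℚ) ≤ 0 := by exact_mod_cast h3
      refine this.trans ?_
      positivity
  have h9 : ((T.card : ℚ) : ℝ) ≤ (((2 * N + 1) / M + 1 : ℚ) : ℝ) := Rat.cast_le.2 h4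
  push_cast at h9
  exact h9

lemma card_fib {α β : Type} (s : Finset α) (t : Finset β) (f : α → β) (hf : ∀ x ∈ s, f x ∈ t) (n : ℕ)
    (h : ∀ b ∈ t, ∃ u : Finset α, u.card ≤ n ∧ ∀ x ∈ s, f x = b → x ∈ u) : s.card ≤ n * t.card := by
  apply Finset.card_le_mul_card_image_of_maps_to hf
  intro b hb
  obtain ⟨u, hu, hu2⟩ := h b hb
  refine (Finset.card_le_card ?_).trans hu
  intro x hx
  exact hu2 x (Finset.mem_filter.1 hx).1 (Finset.mem_filter.1 hx).2

lemma sieve_card {ι J : Type} [Fintype ι] [Fintype J] (p : J → ℕ)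
    (hp : ∀ j, 0 < p j) (hc : Pairwise fun i j => (p i).Coprime (p j))
    (B : ∀ j, Finset (ι → ZMod (p j))) (N : ℕ) :
    (Set.ncard {w : ι → ℤ | (∀ i, |w i| ≤ (N:ℤ)) ∧ ∀ j, (fun i => (w i : ZMod (p j))) ∈ B j} : ℝ) ≤
      ((2 * N + 1) / (∏ j, p j : ℕ) + 1) ^ Fintype.card ι * ∏ j, ((B j).card : ℝ) := by
  obtain ⟨M, hM⟩ : ∃ M : ℕ, M = ∏ j, p j := ⟨_, rfl⟩
  rw [← hM]
  have hMpos : 0 < M := hM ▸ Finset.prod_pos fun j _ => hp j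
  let box : Finset (ι → ℤ) := Fintype.piFinset fun _ => Finset.Icc (-(N:ℤ)) N
  let W := box.filter fun w => ∀ j, (fun i => (w i : ZMod (p j))) ∈ B j
  have hW : {w : ι → ℤ | (∀ i, |w i| ≤ (N:ℤ)) ∧ ∀ j, (fun i => (w i : ZMod (p j))) ∈ B j} = ↑W := by
    ext w
    simp [W, box, Fintype.mem_piFinset, abs_le]
  rw [hW, Set.ncard_coe_finset]
  obtain ⟨L, hL⟩ : ∃ L : ℕ, L = ⌊((2 * N + 1 : ℝ) / M + 1)⌋₊ := ⟨_, rfl⟩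
  have h1 : W.card ≤ L ^ Fintype.card ι * (Fintype.piFinset B).card := by
    refine card_fib W (Fintype.piFinset B) (fun (w : ι → ℤ) (j : J) (i : ι) => (w i : ZMod (p j))) ?_ _ ?_
    · intro w hw
      rw [Fintype.mem_piFinset]
      exact (Finset.mem_filter.1 hw).2
    · intro b _
      let T : ι → Finset ℤ := fun i => (Finset.Icc (-(N:ℤ)) N).filter fun x => ∀ j, (x : ZMod (p j)) = b j i
      refine ⟨Fintype.piFinset T, ?_, ?_⟩
      swap
      · intro w hw1 hw2
        have hw3 := Fintype.mem_piFinset.1 (Finset.mem_filter.1 hw1).1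
        rw [Fintype.mem_piFinset]
        intro i
        refine Finset.mem_filter.2 ⟨hw3 i, fun j => ?_⟩
        exact congrFun (congrFun hw2 j) i
      rw [Fintype.card_piFinset]
      refine (Finset.prod_le_pow_card _ _ L ?_).trans (by simp)
      intro i _
      rw [hL]
      apply Nat.le_floor
      apply int_cong_card N M hMpos
      · intro x hx
        exact abs_le.2 (Finset.mem_Icc.1 (Finset.mem_filter.1 hx).1)
      · intro x hx y hy
        rw [hM, Nat.cast_prod]
        apply Finset.prod_dvd_of_coprime
        · intro i _ j _ hij
          exact Nat.isCoprime_iff_coprime.2 (hc hij)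
        · intro j _
          rw [← ZMod.intCast_eq_intCast_iff_dvd_sub]
          rw [(Finset.mem_filter.1 hx).2 j, (Finset.mem_filter.1 hy).2 j]
  have h2 : (W.card : ℝ) ≤ (L : ℝ) ^ Fintype.card ι * ∏ j, ((B j).card : ℝ) := by
    rw [Fintype.card_piFinset] at h1
    exact_mod_cast h1
  refine h2.trans ?_
  have h0 : (0:ℝ) ≤ (2 * N + 1 : ℝ) / M + 1 := by positivity
  have : (L : ℝ) ≤ (2 * N + 1 : ℝ) / M + 1 := hL ▸ Nat.floor_le h0
  exact mul_le_mul_of_nonneg_right (pow_le_pow_left₀ (Nat.cast_nonneg L) this _)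
    (Finset.prod_nonneg fun j _ => Nat.cast_nonneg _)

lemma sieve_limit {ι : Type} [Fintype ι] (Good : ∀ p : ℕ, Set (ι → ZMod p)) (C : ℕ) (hC : 0 < C) (p0 : ℕ)
    (h : ∀ p : ℕ, p.Prime → p0 ≤ p → p ^ Fintype.card ι ≤ C * (Good p).ncard) (ε : ℝ) (hε : 0 < ε) :
    ∀ᶠ N : ℕ in Filter.atTop, (Set.ncard {w : ι → ℤ | (∀ i, |w i| ≤ (N:ℤ)) ∧
      ∀ p : ℕ, p.Prime → (fun i => (w i : ZMod p)) ∉ Good p} : ℝ) ≤ ε * (2 * N + 1) ^ Fintype.card ι := by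
  set n := Fintype.card ι with hn
  have hC1 : (1:ℝ) ≤ C := by exact_mod_cast hC
  set c : ℝ := 1 - 1 / C with hcdef
  have hc0 : 0 ≤ c := by
    rw [hcdef, sub_nonneg, div_le_one (by linarith)]; exact hC1
  have hc1 : c < 1 := by
    rw [hcdef]; have : (0:ℝ) < 1 / C := by positivity
    linarith
  obtain ⟨r, hr⟩ := exists_pow_lt_of_lt_one (show 0 < ε / 2 ^ n by positivity) hc1
  obtain ⟨S, hSsub, hScard⟩ := (Set.Infinite.exists_subset_card_eq
    (Nat.frequently_atTop_iff_infinite.1 (show ∃ᶠ p in Filter.atTop, p.Prime ∧ p0 ≤ p from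
      (Nat.frequently_atTop_iff_infinite.2 Nat.infinite_setOfPred_prime).and_eventually
        (Filter.eventually_ge_atTop p0))) r)
  have hS : ∀ j : S, (j:ℕ).Prime ∧ p0 ≤ (j:ℕ) := fun j => hSsub j.2
  set M := ∏ j : S, (j : ℕ) with hM
  have hMpos : 0 < M := Finset.prod_pos fun j _ => (hS j).1.pos
  have hne : ∀ j : S, NeZero (j:ℕ) := fun j => ⟨(hS j).1.ne_zero⟩
  let B : ∀ j : S, Finset (ι → ZMod (j:ℕ)) := fun j => (Set.toFinite ((Good j)ᶜ)).toFinset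
  have hB : ∀ j : S, ((B j).card : ℝ) ≤ c * (j:ℝ) ^ n := by
    intro j
    have e1 : (B j).card = ((Good j)ᶜ).ncard := (Set.ncard_eq_toFinset_card _).symm
    have e2 := Set.ncard_add_ncard_compl (Good j)
    rw [Nat.card_eq_fintype_card, Fintype.card_fun, ZMod.card, ← e1] at e2
    have e3 := h j (hS j).1 (hS j).2
    have e4 : ((Good j).ncard : ℝ) + (B j).card = (j:ℝ) ^ n := by exact_mod_cast e2
    have e5 : (j:ℝ) ^ n ≤ C * (Good j).ncard := by exact_mod_cast e3
    have e6 : (j:ℝ) ^ n / C ≤ (Good j).ncard := by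
      rw [div_le_iff₀ (by linarith)]; linarith
    rw [hcdef]
    have : (1 - 1 / (C:ℝ)) * (j:ℝ) ^ n = (j:ℝ) ^ n - (j:ℝ)^n / C := by ring
    rw [this]; linarith
  filter_upwards [Filter.eventually_ge_atTop M] with N hN
  have h1 := sieve_card (fun j : S => (j:ℕ)) (fun j => (hS j).1.pos)
    (fun i j hij => (Nat.coprime_primes (hS i).1 (hS j).1).2 fun h => hij (Subtype.ext h)) B N
  have h2 : (Set.ncard {w : ι → ℤ | (∀ i, |w i| ≤ (N:ℤ)) ∧
      ∀ p : ℕ, p.Prime → (fun i => (w i : ZMod p)) ∉ Good p} : ℝ) ≤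
      Set.ncard {w : ι → ℤ | (∀ i, |w i| ≤ (N:ℤ)) ∧ ∀ j : S, (fun i => (w i : ZMod (j:ℕ))) ∈ B j} := by
    have : Set.Finite {w : ι → ℤ | (∀ i, |w i| ≤ (N:ℤ)) ∧ ∀ j : S, (fun i => (w i : ZMod (j:ℕ))) ∈ B j} := by
      refine (Set.Finite.pi' (t := fun _ : ι => Set.Icc (-(N:ℤ)) N) fun _ => Set.finite_Icc _ _).subset ?_
      intro w hw i
      exact abs_le.1 (hw.1 i)
    refine Nat.cast_le.2 (Set.ncard_le_ncard ?_ this)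
    intro w hw
    refine ⟨hw.1, fun j => ?_⟩
    simp only [B, Set.Finite.mem_toFinset, Set.mem_compl_iff]
    exact hw.2 j (hS j).1
  refine h2.trans (h1.trans ?_)
  rw [← hM, ← hn]
  have h3 : ∏ j : S, ((B j).card : ℝ) ≤ c ^ r * (M:ℝ) ^ n := by
    refine (Finset.prod_le_prod (fun _ _ => by positivity) fun j _ => hB j).trans ?_
    rw [Finset.prod_mul_distrib, Finset.prod_const, Finset.prod_pow, hM]
    simp [hScard]
  have hMr : (0:ℝ) < M := by exact_mod_cast hMpos
  have hNr : (M:ℝ) ≤ N := by exact_mod_cast hN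
  calc ((2 * (N:ℝ) + 1) / M + 1) ^ n * ∏ j : S, ((B j).card : ℝ)
      ≤ ((2 * (N:ℝ) + 1) / M + 1) ^ n * (c ^ r * (M:ℝ) ^ n) := by gcongr
    _ = c ^ r * (2 * N + 1 + M) ^ n := by
        rw [show (2 * (N:ℝ) + 1 + M) = ((2 * (N:ℝ) + 1) / M + 1) * M by field_simp, mul_pow]; ring
    _ ≤ (ε / 2 ^ n) * (2 * (2 * N + 1)) ^ n := by
        gcongr
        linarith
    _ = ε * (2 * N + 1) ^ n := by
        rw [mul_pow]; field_simp

/-- The monic polynomial of degree `d` with coefficient `a` at `k` and free other coefficients. -/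
noncomputable def extPoly {R : Type} [CommRing R] {d : ℕ} (k : ℕ) (a : R)
    (w : {i : Fin d // i.1 ≠ k} → R) : R[X] :=
  monPoly (d := d) fun i => if h : i.1 = k then a else w ⟨i, h⟩

lemma extPoly_coeff_self {R : Type} [CommRing R] {d k : ℕ} (hk : k < d) (a : R)
    (w : {i : Fin d // i.1 ≠ k} → R) : (extPoly k a w).coeff k = a := by
  unfold extPoly
  rw [monPoly_coeff _ k hk]
  simp

lemma extPoly_coeff {R : Type} [CommRing R] {d k : ℕ} (a : R)
    (w : {i : Fin d // i.1 ≠ k} → R) (i : {i : Fin d // i.1 ≠ k}) : (extPoly k a w).coeff i.1.1 = w i := by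
  unfold extPoly
  rw [monPoly_coeff _ i.1.1 i.1.2]
  simp [i.2]

lemma extPoly_eq {R : Type} [CommRing R] [Nontrivial R] {d k : ℕ} (hk : k < d) (a : R) (f : R[X]) (hf : f.Monic)
    (hd : f.natDegree = d) (ha : f.coeff k = a) :
    extPoly (d := d) k a (fun i => f.coeff i.1.1) = f := by
  refine monic_ext (monPoly_monic _) hf (monPoly_natDegree _) hd ?_
  intro i hi
  by_cases h : i = k
  · subst h; rw [ha]; exact extPoly_coeff_self hk a _
  · exact extPoly_coeff a (fun i => f.coeff i.1.1) ⟨⟨i, hi⟩, h⟩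

lemma extPoly_inj {R : Type} [CommRing R] {d k : ℕ} (a : R) :
    Function.Injective (extPoly (d := d) k a) := by
  intro v w h
  funext i
  rw [← extPoly_coeff a v i, h, extPoly_coeff]

lemma extPoly_map {d k : ℕ} (hk : k < d) (p : ℕ) [Fact p.Prime] (a : ℤ) (w : {i : Fin d // i.1 ≠ k} → ℤ) :
    (extPoly k a w).map (Int.castRingHom (ZMod p)) = extPoly k (a : ZMod p) fun i => (w i : ZMod p) := by
  have hm : (extPoly k a w).Monic := monPoly_monic _
  rw [← extPoly_eq (d := d) hk (a : ZMod p) ((extPoly k a w).map (Int.castRingHom (ZMod p))) (hm.map _)]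
  · congr 1
    funext i
    rw [coeff_map, extPoly_coeff]; simp
  · rw [hm.natDegree_map]; exact monPoly_natDegree _
  · rw [coeff_map, extPoly_coeff_self hk]; simp

lemma good_card {d k : ℕ} (hk : k < d) (a : F) (Q : F[X] → Prop) :
    (((mon F d).filter fun f => f.coeff k = a).filter Q).card ≤
      Set.ncard {v : {i : Fin d // i.1 ≠ k} → F | Q (extPoly k a v)} := by
  rw [← Set.ncard_coe_finset]
  refine Set.ncard_le_ncard_of_injOn (fun f i => f.coeff i.1.1) ?_ ?_ (Set.toFinite _)
  · intro f hf
    have hf1 := Finset.mem_filter.1 (Finset.mem_coe.1 hf)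
    have hf2 := Finset.mem_filter.1 hf1.1
    have hf3 := mem_mon.1 hf2.1
    change Q _
    rw [extPoly_eq hk a f hf3.1 hf3.2 hf2.2]
    exact hf1.2
  · intro f hf g hg h
    have hf2 := Finset.mem_filter.1 (Finset.mem_filter.1 (Finset.mem_coe.1 hf)).1
    have hf3 := mem_mon.1 hf2.1
    have hg2 := Finset.mem_filter.1 (Finset.mem_filter.1 (Finset.mem_coe.1 hg)).1
    have hg3 := mem_mon.1 hg2.1
    rw [← extPoly_eq hk a f hf3.1 hf3.2 hf2.2, ← extPoly_eq hk a g hg3.1 hg3.2 hg2.2]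
    exact congrArg _ h

lemma card_idx {d k : ℕ} (hk : k < d) : Fintype.card {i : Fin d // i.1 ≠ k} = d - 1 := by
  have : Fintype.card {i : Fin d // i ≠ ⟨k, hk⟩} = d - 1 := by
    rw [Fintype.card_subtype_compl]; simp
  rw [← this]
  refine Fintype.card_congr (Equiv.subtypeEquivRight fun i => ?_)
  rw [not_iff_not, Fin.ext_iff]

/-- Almost all polynomials satisfy `Q` modulo some prime. -/
lemma bad_limit {d k : ℕ} (hk : k < d) (a : ℤ) (ha : k = 0 → a ≠ 0)
    (Q : ∀ (F : Type) [Field F], F[X] → Prop)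
    (h : ∃ C : ℕ, 0 < C ∧ ∃ p0 : ℕ, ∀ (F : Type) [Field F] [Fintype F], p0 ≤ Fintype.card F →
      (2 : F) ≠ 0 → ∀ b : F, (k = 0 → b ≠ 0) →
      Fintype.card F ^ (d - 1) ≤ C * (((mon F d).filter fun f => f.coeff k = b).filter (Q F)).card)
    (ε : ℝ) (hε : 0 < ε) :
    ∀ᶠ N : ℕ in Filter.atTop, (Set.ncard {w : {i : Fin d // i.1 ≠ k} → ℤ | (∀ i, |w i| ≤ (N:ℤ)) ∧
      ∀ (p : ℕ) [Fact p.Prime], ¬ Q (ZMod p) ((extPoly k a w).map (Int.castRingHom (ZMod p)))} : ℝ)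
        ≤ ε * (2 * N + 1) ^ (d - 1) := by
  obtain ⟨C, hC, p0, h⟩ := h
  have := sieve_limit (ι := {i : Fin d // i.1 ≠ k})
    (fun p => {v | ∀ (_ : Fact p.Prime), Q (ZMod p) (extPoly k (a : ZMod p) v)}) C hC (max p0 (max 3 (a.natAbs + 1))) ?_ ε hε
  · filter_upwards [this] with N hN
    rw [card_idx hk] at hN
    convert hN using 6 with w
    constructor
    · intro hw p hp hw2
      have : Fact p.Prime := ⟨hp⟩
      apply hw p
      rw [extPoly_map hk]
      exact hw2 this
    · intro hw p hp hw2
      apply hw p hp.out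
      intro _
      rw [extPoly_map hk] at hw2
      exact hw2
  · intro p hp hpp
    have : Fact p.Prime := ⟨hp⟩
    have hp0 : p0 ≤ p := (le_max_left _ _).trans hpp
    have hp3 : 3 ≤ p := (le_max_left _ _).trans ((le_max_right _ _).trans hpp)
    have hpa : a.natAbs + 1 ≤ p := (le_max_right _ _).trans ((le_max_right _ _).trans hpp)
    have h20 : (2 : ZMod p) ≠ 0 := by
      intro h0
      have : ((2 : ℕ) : ZMod p) = 0 := by exact_mod_cast h0
      rw [ZMod.natCast_eq_zero_iff] at this
      have := Nat.le_of_dvd (by norm_num) this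
      omega
    have hb : k = 0 → (a : ZMod p) ≠ 0 := by
      intro hk0 h0
      rw [ZMod.intCast_zmod_eq_zero_iff_dvd] at h0
      have h1 := Int.natAbs_dvd_natAbs.2 h0
      have h2 := Nat.le_of_dvd (Int.natAbs_pos.2 (ha hk0)) h1
      simp at h2
      omega
    have h1 := h (ZMod p) (by rwa [ZMod.card]) h20 a hb
    have h2 := good_card (F := ZMod p) hk (a : ZMod p) (Q (ZMod p))
    have h3 := h1.trans (Nat.mul_le_mul_left C h2)
    rw [ZMod.card] at h3
    rw [card_idx hk]
    refine h3.trans (Nat.mul_le_mul_left C (le_of_eq ?_))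
    congr 1
    ext v
    exact ⟨fun h _ => h, fun h => h this⟩

lemma final_limit (d k : ℕ) (hd : 2 ≤ d) (hk : k < d) (a : ℤ) (ha : k = 0 → a ≠ 0) (G : ℤ[X] → Prop)
    (hG : ∀ f : ℤ[X], f.Monic → f.natDegree = d →
      (∃ (p : ℕ) (_ : Fact p.Prime), ∀ x, ¬ (f.map (Int.castRingHom (ZMod p))).IsRoot x) →
      (∃ (p : ℕ) (_ : Fact p.Prime), HasType (d-1) (f.map (Int.castRingHom (ZMod p))) ∧
        (f.map (Int.castRingHom (ZMod p))).Separable) →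
      (d ≠ 2 → ∃ (p : ℕ) (_ : Fact p.Prime), HasType 2 (f.map (Int.castRingHom (ZMod p))) ∧
        (f.map (Int.castRingHom (ZMod p))).Separable) → G f) :
    Filter.Tendsto (fun N : ℕ =>
        (Set.ncard {f : Polynomial ℤ |
            f.Monic ∧ f.natDegree = d ∧ f.coeff k = a ∧
            (∀ i < d, |f.coeff i| ≤ (N : ℤ)) ∧ G f} : ℝ) /
        (Set.ncard {f : Polynomial ℤ |
            f.Monic ∧ f.natDegree = d ∧ f.coeff k = a ∧
            ∀ i < d, |f.coeff i| ≤ (N : ℤ)} : ℝ))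
      Filter.atTop (nhds 1) := by
  have b1 := bad_limit (d := d) hk a ha (fun F _ f => ∀ r, ¬ f.IsRoot r) (by
    obtain ⟨C, hC, p0, h⟩ := noroot_lower hd hk
    refine ⟨C, hC, p0, fun F _ _ h1 h2 b hb => ?_⟩
    convert h F h1 h2 b hb)
  have b2 := bad_limit (d := d) hk a ha (fun F _ f => HasType (d-1) f ∧ f.Separable) (by
    obtain ⟨C, hC, p0, h⟩ := type_lower hd hk (d-1) (by omega) le_rfl
    refine ⟨C, hC, p0, fun F _ _ h1 h2 b _ => ?_⟩
    convert h F h1 h2 b)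
  have b3 := bad_limit (d := d) hk a ha (fun F _ f => HasType (min 2 (d-1)) f ∧ f.Separable) (by
    obtain ⟨C, hC, p0, h⟩ := type_lower hd hk (min 2 (d-1)) (by omega) (by omega)
    refine ⟨C, hC, p0, fun F _ _ h1 h2 b _ => ?_⟩
    convert h F h1 h2 b)
  rw [Metric.tendsto_nhds]
  intro ε hε
  filter_upwards [b1 (ε / 4) (by positivity), b2 (ε / 4) (by positivity), b3 (ε / 4) (by positivity),
    Filter.eventually_ge_atTop a.natAbs] with N h1 h2 h3 hN
  have hfin : Set.Finite {w : {i : Fin d // i.1 ≠ k} → ℤ | ∀ i, |w i| ≤ (N:ℤ)} := by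
    refine (Set.Finite.pi' (t := fun _ => Set.Icc (-(N:ℤ)) N) fun _ => Set.finite_Icc _ _).subset ?_
    intro w hw i
    exact abs_le.1 (hw i)
  have hP : {f : Polynomial ℤ | f.Monic ∧ f.natDegree = d ∧ f.coeff k = a ∧ ∀ i < d, |f.coeff i| ≤ (N : ℤ)} =
      extPoly k a '' {w : {i : Fin d // i.1 ≠ k} → ℤ | ∀ i, |w i| ≤ (N:ℤ)} := by
    ext f
    constructor
    · rintro ⟨f1, f2, f3, f4⟩
      exact ⟨fun i => f.coeff i.1.1, fun i => f4 _ i.1.2, extPoly_eq hk a f f1 f2 f3⟩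
    · rintro ⟨w, hw, rfl⟩
      refine ⟨monPoly_monic _, monPoly_natDegree _, extPoly_coeff_self hk a w, fun i hi => ?_⟩
      by_cases h : i = k
      · subst h
        rw [extPoly_coeff_self hk]
        rw [Int.abs_eq_natAbs]
        exact_mod_cast hN
      · rw [extPoly_coeff a w ⟨⟨i, hi⟩, h⟩]
        exact hw _
  have hPc : Set.ncard {f : Polynomial ℤ | f.Monic ∧ f.natDegree = d ∧ f.coeff k = a ∧
      ∀ i < d, |f.coeff i| ≤ (N : ℤ)} = (2 * N + 1) ^ (d - 1) := by
    rw [hP, Set.ncard_image_of_injective _ (extPoly_inj a)]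
    have : {w : {i : Fin d // i.1 ≠ k} → ℤ | ∀ i, |w i| ≤ (N:ℤ)} =
        ↑(Fintype.piFinset fun _ : {i : Fin d // i.1 ≠ k} => Finset.Icc (-(N:ℤ)) N) := by
      ext w
      rw [Finset.mem_coe, Fintype.mem_piFinset]
      simp only [Set.mem_setOf_eq, Finset.mem_Icc, abs_le]
    rw [this, Set.ncard_coe_finset, Fintype.card_piFinset, Finset.prod_const, Finset.card_univ, card_idx hk,
      Int.card_Icc]
    congr 1
    omega
  have hfinP : Set.Finite {f : Polynomial ℤ | f.Monic ∧ f.natDegree = d ∧ f.coeff k = a ∧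
      ∀ i < d, |f.coeff i| ≤ (N : ℤ)} := by
    rw [hP]; exact hfin.image _
  set PN := {f : Polynomial ℤ | f.Monic ∧ f.natDegree = d ∧ f.coeff k = a ∧
      ∀ i < d, |f.coeff i| ≤ (N : ℤ)} with hPN
  set GN := {f : Polynomial ℤ | f.Monic ∧ f.natDegree = d ∧ f.coeff k = a ∧
      (∀ i < d, |f.coeff i| ≤ (N : ℤ)) ∧ G f} with hGN
  have hsub : GN ⊆ PN := fun f hf => ⟨hf.1, hf.2.1, hf.2.2.1, hf.2.2.2.1⟩
  have hle : GN.ncard ≤ PN.ncard := Set.ncard_le_ncard hsub hfinP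
  set E1 := {w : {i : Fin d // i.1 ≠ k} → ℤ | (∀ i, |w i| ≤ (N:ℤ)) ∧ ∀ (p : ℕ) [Fact p.Prime],
    ¬ ∀ r, ¬ ((extPoly k a w).map (Int.castRingHom (ZMod p))).IsRoot r} with hE1
  set E2 := {w : {i : Fin d // i.1 ≠ k} → ℤ | (∀ i, |w i| ≤ (N:ℤ)) ∧ ∀ (p : ℕ) [Fact p.Prime],
    ¬ (HasType (d-1) ((extPoly k a w).map (Int.castRingHom (ZMod p))) ∧
      ((extPoly k a w).map (Int.castRingHom (ZMod p))).Separable)} with hE2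
  set E3 := {w : {i : Fin d // i.1 ≠ k} → ℤ | (∀ i, |w i| ≤ (N:ℤ)) ∧ ∀ (p : ℕ) [Fact p.Prime],
    ¬ (HasType (min 2 (d-1)) ((extPoly k a w).map (Int.castRingHom (ZMod p))) ∧
      ((extPoly k a w).map (Int.castRingHom (ZMod p))).Separable)} with hE3
  have hcov : PN ⊆ GN ∪ extPoly k a '' (E1 ∪ E2 ∪ E3) := by
    intro f hf
    by_cases hfG : G f
    · exact Or.inl ⟨hf.1, hf.2.1, hf.2.2.1, hf.2.2.2, hfG⟩
    · right
      have hf' := hf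
      rw [hP] at hf'
      obtain ⟨w, hw, rfl⟩ := hf'
      refine ⟨w, ?_, rfl⟩
      by_contra hcon
      apply hfG
      rw [Set.mem_union, Set.mem_union, not_or, not_or] at hcon
      obtain ⟨⟨c1, c2⟩, c3⟩ := hcon
      refine hG _ hf.1 hf.2.1 ?_ ?_ ?_
      · by_contra hc
        exact c1 ⟨hw, fun p hp hh => hc ⟨p, hp, hh⟩⟩
      · by_contra hc
        exact c2 ⟨hw, fun p hp hh => hc ⟨p, hp, hh⟩⟩
      · intro hd2
        by_contra hc
        refine c3 ⟨hw, fun p hp hh => hc ⟨p, hp, ?_⟩⟩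
        rwa [show min 2 (d-1) = 2 by omega] at hh
  have hcount : PN.ncard ≤ GN.ncard + (E1.ncard + E2.ncard + E3.ncard) := by
    have hEfin : (E1 ∪ E2 ∪ E3).Finite := hfin.subset (by
      rintro w ((hw | hw) | hw) <;> exact hw.1)
    refine (Set.ncard_le_ncard hcov ((hfinP.subset hsub).union (hEfin.image _))).trans ?_
    refine (Set.ncard_union_le _ _).trans (Nat.add_le_add_left ?_ _)
    refine (Set.ncard_image_le hEfin).trans ?_
    exact (Set.ncard_union_le _ _).trans (Nat.add_le_add_right (Set.ncard_union_le _ _) _)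
  have hPr : (PN.ncard : ℝ) = (2 * N + 1) ^ (d - 1) := by rw [hPc]; push_cast; rfl
  have hPpos : (0:ℝ) < PN.ncard := by rw [hPr]; positivity
  have hcr : (PN.ncard : ℝ) ≤ GN.ncard + (E1.ncard + E2.ncard + E3.ncard) := by exact_mod_cast hcount
  have hler : (GN.ncard : ℝ) ≤ PN.ncard := by exact_mod_cast hle
  rw [← hPr] at h1 h2 h3
  rw [Real.dist_eq, abs_lt]
  constructor
  · have : 1 - ε < (GN.ncard : ℝ) / PN.ncard := by
      rw [lt_div_iff₀ hPpos]
      nlinarith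
    linarith
  · have : (GN.ncard : ℝ) / PN.ncard ≤ 1 := by
      rw [div_le_one hPpos]; exact hler
    linarith

end counting

/-- among monic integer polynomials of degree `d` with the
coefficient of `X^k` fixed to `a` and all other coefficients bounded by `N`,
the proportion with full symmetric Galois group over `ℚ` tends to `1` as
`N → ∞`. -/
theorem stmt16 (d k : ℕ) (hd : 2 ≤ d) (hk : k < d) (a : ℤ)
    (ha : k = 0 → a ≠ 0) :
    Filter.Tendsto (fun N : ℕ =>
        (Set.ncard {f : Polynomial ℤ |
            f.Monic ∧ f.natDegree = d ∧ f.coeff k = a ∧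
            (∀ i < d, |f.coeff i| ≤ (N : ℤ)) ∧
            (let q : Polynomial ℚ := f.map (algebraMap ℤ ℚ)
             Set.ncard (q.rootSet q.SplittingField) = d ∧
               Function.Bijective
                 (@Polynomial.Gal.galActionHom ℚ _ q q.SplittingField _ _
                   ⟨Polynomial.SplittingField.splits q⟩))} : ℝ) /
        (Set.ncard {f : Polynomial ℤ |
            f.Monic ∧ f.natDegree = d ∧ f.coeff k = a ∧
            ∀ i < d, |f.coeff i| ≤ (N : ℤ)} : ℝ))
      Filter.atTop (nhds 1) := by
  apply final_limit d k hd hk a ha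
  intro f hf hfdeg h1 h2 h3
  obtain ⟨p, hp, h1⟩ := h1
  intro q
  have hsf : Polynomial.IsSplittingField ℚ q.SplittingField q := by
    convert Polynomial.IsSplittingField.splittingField q
    exact Subsingleton.elim _ _
  have hfd : FiniteDimensional ℚ q.SplittingField := Polynomial.IsSplittingField.finiteDimensional _ q
  have hn : Normal ℚ q.SplittingField := Normal.of_isSplittingField q
  exact @full_gal f hf d hfdeg hd q rfl q.SplittingField _ _ hfd hn
    ⟨Polynomial.SplittingField.splits q⟩ ⟨p, hp.out, h1⟩ h2 h3
end
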